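/- arXiv:1805.03624 — 12 statements merged into one kernel-verified Lean document; each statement's English description precedes it below -/
import Mathlib

section
/- For every natural number X there is exactly one sequence (b_{n+1})_{n≥0} of natural numbers, all but finitely many equal to zero, such that X = Σ_{n≥0} b_{n+1} q_n, where 0 ≤ b_1 < a_1, 0 ≤ b_{n+1} ≤ a_{n+1} for all n ≥ 1, and b_n = 0 whenever b_{n+1} = a_{n+1}. (Existence and uniqueness of the α-Ostrowski representation.) -/
/-!
Since `α` is irrational, every complete quotient is irrational, so the partial quotients
`a 1, a 2, …` are positive and the denominators `q n` are positive, nondecreasing and unbounded.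

The digit conditions force `∑ i < n, d i * q i < q n` for every `n` (`sum_lt`): if the top digit
`d (n+1)` is maximal, the digit below vanishes and the recurrence for `q` bounds the sum; otherwise
there is room for one more copy of `q (n+1)`. So `d n` is the quotient, and the lower partial sum
the remainder, in the division of the partial sum up to `n` by `q n`, which gives uniqueness
(`digits_unique`). Conversely, dividing `X < q (n+1)` by `q n` and continuing with the remainder
produces admissible digits (`exists_digits`).
-/

/-- `a` is the sequence of partial quotients of the continued fraction expansion
`[a 0; a 1, a 2, …]` of `α`: there is a sequence `θ` of complete quotients with
`θ 0 = α`, `a n = ⌊θ n⌋` and `θ (n+1) = 1/(θ n - ⌊θ n⌋)`. -/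
def IsCFExpansion (α : ℝ) (a : ℕ → ℕ) : Prop :=
  ∃ θ : ℕ → ℝ, θ 0 = α ∧
    ∀ n : ℕ, (a n : ℤ) = ⌊θ n⌋ ∧ θ (n + 1) = 1 / (θ n - (⌊θ n⌋ : ℝ))

/-- `p n / q n` are the convergents of the continued fraction with partial quotients `a`:
`p₋₁ = 1, q₋₁ = 0, p₀ = a₀, q₀ = 1`, and
`pₙ = aₙ pₙ₋₁ + pₙ₋₂`, `qₙ = aₙ qₙ₋₁ + qₙ₋₂` for `n ≥ 1`. -/
def IsConvergents (a p q : ℕ → ℕ) : Prop :=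
  p 0 = a 0 ∧ q 0 = 1 ∧ p 1 = a 1 * a 0 + 1 ∧ q 1 = a 1 ∧
  (∀ n : ℕ, p (n + 2) = a (n + 2) * p (n + 1) + p n) ∧
  (∀ n : ℕ, q (n + 2) = a (n + 2) * q (n + 1) + q n)

/-- `d` is the sequence of Ostrowski digits of `X` in base the continued fraction
with partial quotients `a` and convergent denominators `q`: `d n` is the digit
`b_{n+1}` multiplying `q n`, the digits are eventually zero,
`X = Σ_{n} d n * q n`, `d 0 < a 1`, `d n ≤ a (n+1)` for `n ≥ 1`, and
`d n = 0` whenever `d (n+1) = a (n+2)`. -/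
def IsOstrowskiRep (a q : ℕ → ℕ) (X : ℕ) (d : ℕ → ℕ) : Prop :=
  d 0 < a 1 ∧ (∀ n : ℕ, d (n + 1) ≤ a (n + 2)) ∧
  (∀ n : ℕ, d (n + 1) = a (n + 2) → d n = 0) ∧
  ∃ N : ℕ, (∀ n : ℕ, N ≤ n → d n = 0) ∧ X = ∑ n ∈ Finset.range N, d n * q n

namespace OstrowskiRep

theorem partialQuotient_pos {α : ℝ} (hirr : Irrational α) {a : ℕ → ℕ}
    (ha : IsCFExpansion α a) (n : ℕ) : 0 < a (n + 1) := by
  obtain ⟨θ, h0, h⟩ := ha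
  have hθ : ∀ n, Irrational (θ n) := by
    intro n
    induction n with
    | zero => rwa [h0]
    | succ n ih =>
      rw [(h n).2, one_div]
      exact (ih.sub_intCast _).inv
  have hpos : 0 < θ n - (⌊θ n⌋ : ℝ) :=
    lt_of_le_of_ne (sub_nonneg.2 (Int.floor_le _)) ((hθ n).sub_intCast _).ne_zero.symm
  have hlt : θ n - (⌊θ n⌋ : ℝ) < 1 := by linarith [Int.lt_floor_add_one (θ n)]
  have h1 : 1 ≤ θ (n + 1) := by
    rw [(h n).2]
    exact (one_le_div hpos).2 hlt.le
  have h2 : (1 : ℤ) ≤ ⌊θ (n + 1)⌋ := Int.le_floor.2 (by simpa using h1)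
  have h3 := (h (n + 1)).1
  omega

variable {a q : ℕ → ℕ}

theorem denom_pos (ha : ∀ n, 0 < a (n + 1)) (h0 : q 0 = 1) (h1 : q 1 = a 1)
    (hq : ∀ n, q (n + 2) = a (n + 2) * q (n + 1) + q n) (n : ℕ) : 0 < q n := by
  induction n using Nat.strong_induction_on with
  | _ n ih =>
    match n with
    | 0 => simp [h0]
    | 1 => simpa [h1] using ha 0
    | n + 2 =>
      have := ih n (by omega)
      rw [hq]
      omega

theorem denom_add_le (ha : ∀ n, 0 < a (n + 1))
    (hq : ∀ n, q (n + 2) = a (n + 2) * q (n + 1) + q n) (n : ℕ) :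
    q (n + 1) + q n ≤ q (n + 2) := by
  rw [hq]
  have : q (n + 1) ≤ a (n + 2) * q (n + 1) := Nat.le_mul_of_pos_left (q (n + 1)) (ha (n + 1))
  omega

theorem denom_le_succ (ha : ∀ n, 0 < a (n + 1)) (h0 : q 0 = 1) (h1 : q 1 = a 1)
    (hq : ∀ n, q (n + 2) = a (n + 2) * q (n + 1) + q n) (n : ℕ) : q n ≤ q (n + 1) := by
  match n with
  | 0 =>
    have := ha 0
    simp only [zero_add] at this ⊢
    omega
  | n + 1 =>
    have := denom_add_le ha hq n
    show q (n + 1) ≤ q (n + 2)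
    omega

theorem le_denom (ha : ∀ n, 0 < a (n + 1)) (h0 : q 0 = 1) (h1 : q 1 = a 1)
    (hq : ∀ n, q (n + 2) = a (n + 2) * q (n + 1) + q n) (n : ℕ) : n ≤ q n := by
  induction n with
  | zero => exact Nat.zero_le _
  | succ n ih =>
    match n with
    | 0 => exact denom_pos ha h0 h1 hq 1
    | n + 1 =>
      have := denom_add_le ha hq n
      have := denom_pos ha h0 h1 hq n
      show n + 2 ≤ q (n + 2)
      omega

/-- The digit conditions of `IsOstrowskiRep`, without reference to the represented number. -/
def Admissible (a d : ℕ → ℕ) : Prop :=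
  d 0 < a 1 ∧ (∀ n : ℕ, d (n + 1) ≤ a (n + 2)) ∧ (∀ n : ℕ, d (n + 1) = a (n + 2) → d n = 0)

theorem sum_lt (h0 : q 0 = 1) (h1 : q 1 = a 1)
    (hq : ∀ n, q (n + 2) = a (n + 2) * q (n + 1) + q n) {d : ℕ → ℕ} (hd : Admissible a d)
    (n : ℕ) : ∑ i ∈ Finset.range n, d i * q i < q n := by
  obtain ⟨hd0, hle, hmax⟩ := hd
  induction n using Nat.strong_induction_on with
  | _ n ih =>
    match n with
    | 0 => simp [h0]
    | 1 => simpa [h0, h1] using hd0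
    | n + 2 =>
      have hn := ih n (by omega)
      have hn1 := ih (n + 1) (by omega)
      rw [Finset.sum_range_succ, hq]
      rcases (hle n).eq_or_lt with h | h
      · rw [Finset.sum_range_succ, hmax n h, h]
        omega
      · have := Nat.mul_le_mul_right (q (n + 1)) (Nat.succ_le_of_lt h)
        rw [Nat.succ_mul] at this
        omega

theorem digits_unique (h0 : q 0 = 1) (h1 : q 1 = a 1)
    (hq : ∀ n, q (n + 2) = a (n + 2) * q (n + 1) + q n) {d e : ℕ → ℕ}
    (hd : Admissible a d) (he : Admissible a e) (n : ℕ)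
    (h : ∑ i ∈ Finset.range n, d i * q i = ∑ i ∈ Finset.range n, e i * q i) :
    ∀ i < n, d i = e i := by
  induction n with
  | zero => intro i hi; omega
  | succ n ih =>
    have hdn := sum_lt h0 h1 hq hd n
    have hen := sum_lt h0 h1 hq he n
    rw [Finset.sum_range_succ, Finset.sum_range_succ] at h
    have hpos : 0 < q n := by omega
    have key : d n = e n := by
      have := congrArg (· / q n) h
      simpa [Nat.add_mul_div_right _ _ hpos, Nat.div_eq_of_lt hdn, Nat.div_eq_of_lt hen]
        using this
    rw [key] at h
    intro i hi
    rcases Nat.lt_succ_iff_lt_or_eq.1 hi with hi | rfl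
    · exact ih (by omega) i hi
    · exact key

theorem exists_digits (ha : ∀ n, 0 < a (n + 1)) (h0 : q 0 = 1) (h1 : q 1 = a 1)
    (hq : ∀ n, q (n + 2) = a (n + 2) * q (n + 1) + q n) (n : ℕ) :
    ∀ X < q n, ∃ d : ℕ → ℕ, Admissible a d ∧ (∀ i, n ≤ i → d i = 0) ∧
      X = ∑ i ∈ Finset.range n, d i * q i := by
  induction n with
  | zero =>
    intro X hX
    refine ⟨fun _ => 0, ⟨ha 0, fun _ => Nat.zero_le _, fun _ _ => rfl⟩, fun _ _ => rfl, ?_⟩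
    simp only [h0] at hX
    simp
    omega
  | succ n ih =>
    intro X hX
    have hpos := denom_pos ha h0 h1 hq n
    obtain ⟨d, ⟨hd0, hle, hmax⟩, hz, hs⟩ := ih (X % q n) (Nat.mod_lt _ hpos)
    have hdiv := Nat.div_add_mod' X (q n)
    refine ⟨Function.update d n (X / q n), ⟨?_, ?_, ?_⟩, ?_, ?_⟩
    · rcases Nat.eq_zero_or_pos n with rfl | hn
      · simpa [h0, ← h1] using hX
      · rwa [Function.update_of_ne (by omega)]
    · intro m
      by_cases hm : m + 1 = n
      · subst hm
        rw [Function.update_self]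
        refine Nat.lt_succ_iff.1 ((Nat.div_lt_iff_lt_mul hpos).2 ?_)
        have := denom_le_succ ha h0 h1 hq m
        have := hq m
        rw [Nat.succ_mul]
        have : X < q (m + 2) := hX
        omega
      · rw [Function.update_of_ne hm]
        exact hle m
    · intro m h
      by_cases hm : m + 1 = n
      · subst hm
        rw [Function.update_self] at h
        rw [Function.update_of_ne (by omega)]
        -- A maximal quotient leaves a remainder below `q m`, too small for a nonzero digit `d m`.
        have hsm : X % q (m + 1) = ∑ i ∈ Finset.range m, d i * q i + d m * q m := by
          rw [hs, Finset.sum_range_succ]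
        by_contra hne
        have := Nat.le_mul_of_pos_left (q m) (Nat.pos_of_ne_zero hne)
        have hrem : X % q (m + 1) < q m := by
          rw [h] at hdiv
          have : X < q (m + 2) := hX
          rw [hq] at this
          omega
        omega
      · rw [Function.update_of_ne hm] at h
        by_cases hmn : m = n
        · -- The digit above the new top digit is zero, hence not maximal.
          have h2 := hz (m + 1) (by omega)
          have h3 := ha (m + 1)
          rw [h] at h2
          exact absurd h2 h3.ne'
        · rw [Function.update_of_ne hmn]
          exact hmax m h
    · intro i hi
      rw [Function.update_of_ne (by omega)]
      exact hz i (by omega)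
    · rw [Finset.sum_range_succ, Function.update_self]
      have : ∑ i ∈ Finset.range n, Function.update d n (X / q n) i * q i
          = ∑ i ∈ Finset.range n, d i * q i := by
        refine Finset.sum_congr rfl fun i hi => ?_
        rw [Function.update_of_ne (Finset.mem_range.1 hi).ne]
      rw [this, ← hs]
      omega

/-- The bound `N` in a representation may be enlarged, so that two representations can be
compared over a common range. -/
theorem sum_range_eq_of_le {d : ℕ → ℕ} {N M : ℕ} (hz : ∀ n, N ≤ n → d n = 0) (h : N ≤ M) :
    ∑ i ∈ Finset.range N, d i * q i = ∑ i ∈ Finset.range M, d i * q i := by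
  refine Finset.sum_subset (Finset.range_mono h) fun i _ hi => ?_
  rw [hz i (by simpa using hi), zero_mul]

end OstrowskiRep

/-- **Existence and uniqueness of the α-Ostrowski representation.**
For every natural number `X` there is exactly one (eventually zero) sequence of
digits `d` with `X = Σ_n d n * q n`, `d 0 < a 1`, `d (n+1) ≤ a (n+2)` and
`d n = 0` whenever `d (n+1) = a (n+2)`. -/
theorem ostrowski_representation_existsUnique
    (α : ℝ) (hα : 0 < α) (hirr : Irrational α)
    (a : ℕ → ℕ) (ha : IsCFExpansion α a)
    (p q : ℕ → ℕ) (hpq : IsConvergents a p q)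
    (X : ℕ) :
    ∃! d : ℕ → ℕ, IsOstrowskiRep a q X d := by
  obtain ⟨-, h0, -, h1, -, hq⟩ := hpq
  have hpos := OstrowskiRep.partialQuotient_pos hirr ha
  obtain ⟨d, hd, hz, hs⟩ := OstrowskiRep.exists_digits hpos h0 h1 hq (X + 1) X
    (OstrowskiRep.le_denom hpos h0 h1 hq (X + 1))
  refine ⟨d, ⟨hd.1, hd.2.1, hd.2.2, X + 1, hz, hs⟩, ?_⟩
  rintro e ⟨he0, hele, hemax, N, hez, hes⟩
  funext i
  -- A range long enough to contain both supports and the index `i`.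
  have key : ∑ j ∈ Finset.range (N + (X + 1) + (i + 1)), e j * q j
      = ∑ j ∈ Finset.range (N + (X + 1) + (i + 1)), d j * q j := by
    rw [← OstrowskiRep.sum_range_eq_of_le hez (by omega),
      ← OstrowskiRep.sum_range_eq_of_le hz (by omega), ← hes, ← hs]
  exact OstrowskiRep.digits_unique h0 h1 hq ⟨he0, hele, hemax⟩ hd _ key i (by omega)
end

section
/- For every n ∈ ℕ, the series a_{n+2} β_{n+1} + a_{n+4} β_{n+3} + a_{n+6} β_{n+5} + ⋯ (i.e., Σ_{j≥0} a_{n+2j+2} β_{n+2j+1}) converges and its sum equals −β_n. -/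
/-- The `n`-th difference of `α`: `βₙ = qₙ α − pₙ`. -/
noncomputable def cfBeta (α : ℝ) (p q : ℕ → ℕ) (n : ℕ) : ℝ :=
  (q n : ℝ) * α - (p n : ℝ)

theorem cfBeta_add_two (α : ℝ) {a p q : ℕ → ℕ} (hpq : IsConvergents a p q) (n : ℕ) :
    cfBeta α p q (n + 2) = a (n + 2) * cfBeta α p q (n + 1) + cfBeta α p q n := by
  obtain ⟨-, -, -, -, hp, hq⟩ := hpq
  simp only [cfBeta, hp n, hq n]
  push_cast
  ring

/-- The complete quotients of an irrational number: the fractional part of `θ n` is the inverse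
of `θ (n+1)`, and `θ (n+1) > 1`. Irrationality ensures that no division by zero occurs. -/
theorem exists_completeQuotients {α : ℝ} (hirr : Irrational α) {a : ℕ → ℕ}
    (ha : IsCFExpansion α a) :
    ∃ θ : ℕ → ℝ, θ 0 = α ∧ ∀ n, 1 < θ (n + 1) ∧ (θ n - a n) * θ (n + 1) = 1 := by
  obtain ⟨θ, h0, h⟩ := ha
  have hirrθ : ∀ n, Irrational (θ n) := by
    intro n
    induction n with
    | zero => rwa [h0]
    | succ n ih =>
      rw [(h n).2, one_div]
      exact (ih.sub_intCast _).inv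
  refine ⟨θ, h0, fun n => ?_⟩
  have hfloor : (a n : ℝ) = (⌊θ n⌋ : ℝ) := by exact_mod_cast (h n).1
  have hpos : 0 < θ n - (⌊θ n⌋ : ℝ) :=
    lt_of_le_of_ne (sub_nonneg.2 (Int.floor_le _)) ((hirrθ n).sub_intCast _).ne_zero.symm
  have hlt : θ n - (⌊θ n⌋ : ℝ) < 1 := by linarith [Int.lt_floor_add_one (θ n)]
  rw [hfloor, (h n).2]
  exact ⟨one_lt_one_div hpos hlt, mul_one_div_cancel hpos.ne'⟩

theorem cfBeta_eq {α : ℝ} {a p q : ℕ → ℕ} (hpq : IsConvergents a p q) {θ : ℕ → ℝ}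
    (h0 : θ 0 = α) (h : ∀ n, 1 < θ (n + 1) ∧ (θ n - a n) * θ (n + 1) = 1) (n : ℕ) :
    cfBeta α p q n = -θ (n + 2) * cfBeta α p q (n + 1) := by
  induction n with
  | zero =>
    obtain ⟨hp0, hq0, hp1, hq1, -, -⟩ := hpq
    have e0 := (h 0).2
    have e1 := (h 1).2
    simp only [zero_add, one_add_one_eq_two, h0] at e0 e1 ⊢
    simp only [cfBeta, hp0, hq0, hp1, hq1]
    push_cast
    linear_combination (-(α - a 0)) * e1 + θ 2 * e0
  | succ n ih =>
    have e := (h (n + 2)).2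
    have hrec := cfBeta_add_two α hpq n
    linear_combination (-cfBeta α p q (n + 1)) * e + θ (n + 3) * hrec + θ (n + 3) * ih

theorem abs_cfBeta_add_two_le {α : ℝ} (hirr : Irrational α) {a p q : ℕ → ℕ}
    (ha : IsCFExpansion α a) (hpq : IsConvergents a p q) (n : ℕ) :
    |cfBeta α p q (n + 2)| ≤ |cfBeta α p q n| / 2 := by
  obtain ⟨θ, h0, h⟩ := exists_completeQuotients hirr ha
  have hprod : cfBeta α p q n = θ (n + 2) * θ (n + 3) * cfBeta α p q (n + 2) := by
    rw [cfBeta_eq hpq h0 h n, cfBeta_eq hpq h0 h (n + 1)]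
    ring
  have hθ : 1 < θ (n + 2) := (h (n + 1)).1
  have hθ' : 1 < θ (n + 3) := (h (n + 2)).1
  have e : (θ (n + 2) - a (n + 2)) * θ (n + 3) = 1 := (h (n + 2)).2
  -- A zero partial quotient would give `θ (n+2) * θ (n+3) = 1`.
  have ha1 : (1 : ℝ) ≤ a (n + 2) := by
    rcases Nat.eq_zero_or_pos (a (n + 2)) with hz | hz
    · rw [hz] at e
      push_cast at e
      nlinarith
    · exact_mod_cast hz
  have h2 : 2 ≤ θ (n + 2) * θ (n + 3) := by nlinarith
  rw [hprod, abs_mul, abs_of_nonneg (by linarith : 0 ≤ θ (n + 2) * θ (n + 3))]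
  nlinarith [abs_nonneg (cfBeta α p q (n + 2))]

/-- For every `n`, the series `a_{n+2} β_{n+1} + a_{n+4} β_{n+3} + ⋯` converges
and its sum is `−β_n`. -/
theorem hasSum_cfBeta_tail
    (α : ℝ) (hα : 0 < α) (hirr : Irrational α)
    (a : ℕ → ℕ) (ha : IsCFExpansion α a)
    (p q : ℕ → ℕ) (hpq : IsConvergents a p q)
    (n : ℕ) :
    HasSum (fun j : ℕ => (a (n + 2 * j + 2) : ℝ) * cfBeta α p q (n + 2 * j + 1))
      (-(cfBeta α p q n)) := by
  have hterm : ∀ j, (a (n + 2 * j + 2) : ℝ) * cfBeta α p q (n + 2 * j + 1) =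
      cfBeta α p q (n + 2 * (j + 1)) - cfBeta α p q (n + 2 * j) := fun j => by
    linear_combination -cfBeta_add_two α hpq (n + 2 * j)
  have hbound : ∀ j, |cfBeta α p q (n + 2 * j)| ≤ |cfBeta α p q n| * (1 / 2) ^ j := by
    intro j
    induction j with
    | zero => simp
    | succ j ih =>
      have hhalf := abs_cfBeta_add_two_le hirr ha hpq (n + 2 * j)
      rw [show n + 2 * (j + 1) = n + 2 * j + 2 by ring, pow_succ]
      linarith
  have hgeom : Summable fun j : ℕ => |cfBeta α p q n| * (1 / 2 : ℝ) ^ j :=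
    summable_geometric_two.mul_left _
  have hsum : Summable fun j => cfBeta α p q (n + 2 * j) :=
    Summable.of_norm_bounded hgeom hbound
  simp only [hterm]
  have hsucc : Summable fun j => cfBeta α p q (n + 2 * (j + 1)) :=
    (summable_nat_add_iff (f := fun j => cfBeta α p q (n + 2 * j)) 1).2 hsum
  rw [(hsucc.sub hsum).hasSum_iff_tendsto_nat]
  simp only [Finset.sum_range_sub (fun j => cfBeta α p q (n + 2 * j))]
  simpa using hsum.tendsto_atTop_zero.sub_const (cfBeta α p q n)
end

section
/- Let X ∈ ℕ with Ostrowski representation X = Σ_{n≥0} b_{n+1} q_n. Then Σ_{n≥0} b_{n+1} β_n lies in I_α; consequently f_α(X) = Σ_{n≥0} b_{n+1} β_n and g_α(X) = Σ_{n≥0} b_{n+1} p_n. -/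
/-- The half-open interval `I_α = [−1/ζ_α, 1 − 1/ζ_α)` where `ζ_α = 1/(α − ⌊α⌋)`. -/
def Ialpha (α : ℝ) : Set ℝ :=
  Set.Ico (-(1 / (1 / (α - (⌊α⌋ : ℝ))))) (1 - 1 / (1 / (α - (⌊α⌋ : ℝ))))

/-- `f` is the function `f_α : ℕ → I_α` with `f_α X` the unique element of `I_α`
such that `α X − f_α X` is a (natural) integer. -/
def IsFracPart (α : ℝ) (f : ℕ → ℝ) : Prop :=
  ∀ X : ℕ, f X ∈ Ialpha α ∧ ∃ U : ℕ, α * (X : ℝ) - f X = (U : ℝ)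

/-- The alternating tail of a digit expansion stays strictly between `-γ n` and
`a (n+1) γ n + γ (n+1)`, which is `γ (n-1)` for `n ≥ 1`. -/
lemma tail_bounds (a d : ℕ → ℕ) (γ : ℕ → ℝ) (hpos : ∀ n, 0 < γ n)
    (hrec : ∀ n, γ n = a (n + 2) * γ (n + 1) + γ (n + 2))
    (hle : ∀ n, d n ≤ a (n + 1)) (k : ℕ) : ∀ n : ℕ,
    -γ n < ∑ j ∈ Finset.range k, (-1 : ℝ) ^ j * (d (n + j) * γ (n + j)) ∧
    ∑ j ∈ Finset.range k, (-1 : ℝ) ^ j * (d (n + j) * γ (n + j))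
      < a (n + 1) * γ n + γ (n + 1) := by
  induction k with
  | zero =>
    intro n
    have h0 := hpos n
    have h1 := hpos (n + 1)
    simp only [Finset.range_zero, Finset.sum_empty]
    exact ⟨by linarith, by positivity⟩
  | succ k ih =>
    intro n
    obtain ⟨h1, h2⟩ := ih (n + 1)
    have hstep : ∑ j ∈ Finset.range (k + 1), (-1 : ℝ) ^ j * (d (n + j) * γ (n + j))
        = d n * γ n
          - ∑ j ∈ Finset.range k, (-1 : ℝ) ^ j * (d (n + 1 + j) * γ (n + 1 + j)) := by
      rw [Finset.sum_range_succ', sub_eq_add_neg, add_comm, ← Finset.sum_neg_distrib]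
      congr 1
      · simp
      · refine Finset.sum_congr rfl fun j _ => ?_
        rw [show n + (j + 1) = n + 1 + j by ring]
        ring
    rw [hstep]
    have hr := hrec n
    have hdn : (d n : ℝ) * γ n ≤ a (n + 1) * γ n :=
      mul_le_mul_of_nonneg_right (by exact_mod_cast hle n) (hpos n).le
    have hd0 : 0 ≤ (d n : ℝ) * γ n := mul_nonneg (Nat.cast_nonneg _) (hpos n).le
    exact ⟨by linarith, by linarith⟩

/-- The sign-normalised difference `(-1)^n β_n`, which equals `|β_n|`. -/
noncomputable def cfGamma (α : ℝ) (p q : ℕ → ℕ) (n : ℕ) : ℝ :=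
  (-1) ^ n * cfBeta α p q n

lemma cfGamma_rec {α : ℝ} {a p q : ℕ → ℕ} (hpq : IsConvergents a p q) (n : ℕ) :
    cfGamma α p q n = a (n + 2) * cfGamma α p q (n + 1) + cfGamma α p q (n + 2) := by
  obtain ⟨-, -, -, -, hp, hq⟩ := hpq
  simp only [cfGamma, cfBeta, hp, hq]
  push_cast
  ring

lemma cfGamma_zero {α : ℝ} {a p q : ℕ → ℕ} (hpq : IsConvergents a p q) :
    cfGamma α p q 0 = α - a 0 := by
  obtain ⟨hp, hq, -⟩ := hpq
  simp [cfGamma, cfBeta, hp, hq]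

/-- The recursion for `cfGamma` one step earlier, with the value `1` at index `-1`. -/
lemma cfGamma_start {α : ℝ} {a p q : ℕ → ℕ} (hpq : IsConvergents a p q) :
    a 1 * cfGamma α p q 0 + cfGamma α p q 1 = 1 := by
  obtain ⟨hp0, hq0, hp1, hq1, -⟩ := hpq
  simp only [cfGamma, cfBeta, hp0, hq0, hp1, hq1]
  push_cast
  ring

lemma cfGamma_pos {α : ℝ} (hirr : Irrational α) {a p q : ℕ → ℕ} (ha : IsCFExpansion α a)
    (hpq : IsConvergents a p q) (n : ℕ) : 0 < cfGamma α p q n := by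
  obtain ⟨θ, hθ0, hθ⟩ := ha
  have hfl : ∀ n, ((⌊θ n⌋ : ℤ) : ℝ) = a n := fun n => by
    rw [← (hθ n).1]; simp
  have hθs : ∀ n, θ (n + 1) = 1 / (θ n - a n) := fun n => by
    rw [(hθ n).2, hfl]
  have hirrθ : ∀ n, Irrational (θ n) := by
    intro n
    induction n with
    | zero => rwa [hθ0]
    | succ n ih =>
      rw [hθs, one_div]
      exact (ih.sub_natCast (a n)).inv
  have hfr : ∀ n, 0 < θ n - a n := by
    intro n
    have h1 : (a n : ℝ) ≤ θ n := by rw [← hfl]; exact Int.floor_le _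
    have h2 : θ n ≠ a n := (hirrθ n).ne_nat _
    exact sub_pos.mpr (lt_of_le_of_ne h1 h2.symm)
  have hmul : ∀ n, θ (n + 1) * (θ n - a n) = 1 := fun n => by
    rw [hθs, one_div, inv_mul_cancel₀ (hfr n).ne']
  have hz := cfGamma_zero (α := α) hpq
  have hstep : ∀ n, cfGamma α p q (n + 1) = (θ (n + 1) - a (n + 1)) * cfGamma α p q n := by
    intro n
    induction n with
    | zero =>
      have h := cfGamma_start (α := α) hpq
      have hm := hmul 0
      rw [hθ0, ← hz] at hm
      linear_combination h - hm
    | succ n ih =>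
      have h := cfGamma_rec (α := α) hpq n
      linear_combination -h - θ (n + 2) * ih - cfGamma α p q n * hmul (n + 1)
  induction n with
  | zero => rw [hz, ← hθ0]; exact hfr 0
  | succ n ih => rw [hstep]; exact mul_pos (hfr _) ih

/-- If `X` has Ostrowski digits `d` (all zero from `N` on), then
`Σ_n d n * β n` lies in `I_α`; consequently `f_α X = Σ_n d n * β n` and
`g_α X = Σ_n d n * p n`, where `g_α X = α X − f_α X`. -/
theorem fracPart_eq_sum_cfBeta
    (α : ℝ) (hα : 0 < α) (hirr : Irrational α)
    (a : ℕ → ℕ) (ha : IsCFExpansion α a)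
    (p q : ℕ → ℕ) (hpq : IsConvergents a p q)
    (fα : ℕ → ℝ) (hf : IsFracPart α fα)
    (gα : ℕ → ℕ) (hg : ∀ X : ℕ, (gα X : ℝ) = α * (X : ℝ) - fα X)
    (X : ℕ) (d : ℕ → ℕ) (hd : IsOstrowskiRep a q X d)
    (N : ℕ) (hN : ∀ n : ℕ, N ≤ n → d n = 0)
    (hX : X = ∑ n ∈ Finset.range N, d n * q n) :
    (∑ n ∈ Finset.range N, (d n : ℝ) * cfBeta α p q n) ∈ Ialpha α ∧
    fα X = ∑ n ∈ Finset.range N, (d n : ℝ) * cfBeta α p q n ∧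
    gα X = ∑ n ∈ Finset.range N, d n * p n := by
  have hz := cfGamma_zero (α := α) hpq
  have hstart := cfGamma_start (α := α) hpq
  have hpos := cfGamma_pos hirr ha hpq
  have hrec := cfGamma_rec (α := α) hpq
  have hI : Ialpha α = Set.Ico (-cfGamma α p q 0) (1 - cfGamma α p q 0) := by
    obtain ⟨θ, hθ0, hθ⟩ := ha
    have hfl : ((⌊α⌋ : ℤ) : ℝ) = a 0 := by rw [← hθ0, ← (hθ 0).1]; simp
    rw [Ialpha, one_div_one_div, hfl, hz]
  obtain ⟨hd0, hd1, -, -⟩ := hd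
  have hle : ∀ n, d n ≤ a (n + 1) := by
    rintro (_ | n)
    · exact hd0.le
    · exact hd1 n
  have hsum : ∀ M : ℕ, ∑ n ∈ Finset.range M, (d n : ℝ) * cfBeta α p q n
      = ∑ j ∈ Finset.range M, (-1 : ℝ) ^ j * (d (0 + j) * cfGamma α p q (0 + j)) := by
    intro M
    refine Finset.sum_congr rfl fun j _ => ?_
    have h1 : (-1 : ℝ) ^ j * (-1) ^ j = 1 := by rw [← mul_pow]; simp
    rw [zero_add, cfGamma]
    linear_combination -(d j * cfBeta α p q j) * h1
  have hlow := (tail_bounds a d _ hpos hrec hle N 0).1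
  rw [← hsum] at hlow
  -- The recursion only involves `a n` for `n ≥ 2`, so `a 1` may be lowered to `d 0`; since
  -- `d 0 < a 1`, this improves the upper bound by at least `γ 0`.
  have hup := (tail_bounds (fun n => if n = 1 then d 0 else a n) d _ hpos
    (by intro n; simpa using hrec n)
    (by rintro (_ | n) <;> simp [hd1]) N 0).2
  rw [← hsum] at hup
  have hd0' : ((d 0 : ℝ) + 1) * cfGamma α p q 0 ≤ a 1 * cfGamma α p q 0 :=
    mul_le_mul_of_nonneg_right (by exact_mod_cast hd0) (hpos 0).le
  simp only [zero_add, if_true] at hup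
  have hmem : (∑ n ∈ Finset.range N, (d n : ℝ) * cfBeta α p q n) ∈ Ialpha α := by
    rw [hI]
    exact ⟨hlow.le, by linarith⟩
  have hsplit : ∑ n ∈ Finset.range N, (d n : ℝ) * cfBeta α p q n
      = α * X - ((∑ n ∈ Finset.range N, d n * p n : ℕ) : ℝ) := by
    rw [hX]
    push_cast
    rw [Finset.mul_sum, ← Finset.sum_sub_distrib]
    refine Finset.sum_congr rfl fun j _ => ?_
    rw [cfBeta]
    ring
  have hfX := (hf X).1
  have hgX := hg X
  have hmem' := hmem
  rw [hI] at hfX hmem'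
  have hP : gα X = ∑ n ∈ Finset.range N, d n * p n := by
    -- Both integers are `α X` minus a point of `I_α`, so they differ by less than one.
    generalize (∑ n ∈ Finset.range N, d n * p n) = P at *
    obtain ⟨h1, h2⟩ := hfX
    obtain ⟨h3, h4⟩ := hmem'
    have h5 : gα X < P + 1 := by
      have : (gα X : ℝ) < P + 1 := by linarith
      exact_mod_cast this
    have h6 : P < gα X + 1 := by
      have : (P : ℝ) < gα X + 1 := by linarith
      exact_mod_cast this
    omega
  refine ⟨hmem, ?_, hP⟩
  rw [hsplit, ← hP]
  linarith
end

section
/- Suppose a_{n+k} = a_n for all n ∈ ℕ (α is purely periodic with period k ≥ 1). Then for every i ∈ ℕ there exist integers c_i and d_i such that for every n ∈ ℕ with k | n, one has p_{n+i} = c_i p_n + d_i p_{n+1} and q_{n+i} = c_i q_n + d_i q_{n+1}. -/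
/-- If the continued fraction of `α` is purely periodic with period `k`, then for
every `i` there are integers `cᵢ, dᵢ` with
`(p_{n+i}, q_{n+i}) = cᵢ (p_n, q_n) + dᵢ (p_{n+1}, q_{n+1})` whenever `k ∣ n`. -/
theorem convergents_shift_linear_combination
    (α : ℝ) (hα : 0 < α) (hirr : Irrational α)
    (a : ℕ → ℕ) (ha : IsCFExpansion α a)
    (p q : ℕ → ℕ) (hpq : IsConvergents a p q)
    (k : ℕ) (hk : 1 ≤ k) (hper : ∀ n : ℕ, a (n + k) = a n) :
    ∀ i : ℕ, ∃ c d : ℤ, ∀ n : ℕ, k ∣ n →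
      (p (n + i) : ℤ) = c * (p n : ℤ) + d * (p (n + 1) : ℤ) ∧
      (q (n + i) : ℤ) = c * (q n : ℤ) + d * (q (n + 1) : ℤ) := by
  obtain ⟨-, -, -, -, hp, hq⟩ := hpq
  have hshift : ∀ n m : ℕ, k ∣ n → a (n + m) = a m := by
    rintro _ m ⟨t, rfl⟩
    rw [add_comm, mul_comm]
    exact Function.Periodic.nat_mul hper t m
  intro i
  induction i using Nat.twoStepInduction with
  | zero => exact ⟨1, 0, fun n _ => by simp⟩
  | one => exact ⟨0, 1, fun n _ => by simp⟩
  | more i ih₀ ih₁ =>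
    obtain ⟨c₀, d₀, h₀⟩ := ih₀
    obtain ⟨c₁, d₁, h₁⟩ := ih₁
    refine ⟨a (i + 2) * c₁ + c₀, a (i + 2) * d₁ + d₀, fun n hn => ?_⟩
    obtain ⟨hp₀, hq₀⟩ := h₀ n hn
    obtain ⟨hp₁, hq₁⟩ := h₁ n hn
    have ha' : a (n + i + 2) = a (i + 2) := hshift n (i + 2) hn
    have hp₂ := hp (n + i)
    have hq₂ := hq (n + i)
    rw [ha'] at hp₂ hq₂
    rw [← add_assoc] at hp₁ hq₁ ⊢
    constructor
    · rw [hp₂]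
      push_cast
      rw [hp₁, hp₀]
      ring
    · rw [hq₂]
      push_cast
      rw [hq₁, hq₀]
      ring
end

section
/- Suppose a_{n+k} = a_n for all n ∈ ℕ (α is purely periodic with period k ≥ 1). Then there exist rational numbers μ, μ', ν, ν' such that for all n ∈ ℕ, p_n = μ q_n + μ' q_{n+k} and q_n = ν p_n + ν' p_{n+k}. -/
/-- Irrationality of `α` passes to every complete quotient `θ n`, so the fractional part of `θ n`
lies strictly between `0` and `1` and `θ (n + 1) > 1`. -/
theorem partialQuotient_succ_pos {α : ℝ} (hirr : Irrational α) {a : ℕ → ℕ}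
    (ha : IsCFExpansion α a) (n : ℕ) : 0 < a (n + 1) := by
  obtain ⟨θ, h0, h⟩ := ha
  have hθ : ∀ n, Irrational (θ n) := by
    intro n
    induction n with
    | zero => rwa [h0]
    | succ n ih =>
      rw [(h n).2, one_div]
      exact (ih.sub_intCast _).inv
  have hne : θ n - (⌊θ n⌋ : ℝ) ≠ 0 := ((hθ n).sub_intCast _).ne_zero
  have hnonneg : 0 ≤ θ n - (⌊θ n⌋ : ℝ) := sub_nonneg.2 (Int.floor_le _)
  have hlt : θ n - (⌊θ n⌋ : ℝ) < 1 := by linarith [Int.lt_floor_add_one (θ n)]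
  have hone : (1 : ℝ) ≤ θ (n + 1) := by
    rw [(h n).2]
    exact (one_le_div (lt_of_le_of_ne hnonneg hne.symm)).2 hlt.le
  have hfl : (1 : ℤ) ≤ ⌊θ (n + 1)⌋ := Int.le_floor.2 (by simpa using hone)
  have := (h (n + 1)).1
  omega

theorem pos_of_recurrence {a u : ℕ → ℕ} (h0 : 0 < u 0) (h1 : 0 < u 1)
    (hu : ∀ n, u (n + 2) = a (n + 2) * u (n + 1) + u n) (n : ℕ) : 0 < u n := by
  induction n using Nat.twoStepInduction with
  | zero => exact h0
  | one => exact h1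
  | more n ih _ => rw [hu]; omega

/-- By periodicity, `n ↦ u (n + j + 1)` solves the recurrence of `p` and `q`, hence is a linear
combination of them; the coefficients are forced by the values at `n = 0, 1`.
The second one equals `u (j - 1)` when `j ≥ 1`. -/
theorem shift_eq {a p q : ℕ → ℕ} (hpq : IsConvergents a p q) (j : ℕ)
    (hper : ∀ n, a (n + (j + 1)) = a n) {u : ℕ → ℚ}
    (hu : ∀ n, u (n + 2) = a (n + 2) * u (n + 1) + u n) (n : ℕ) :
    u (n + (j + 1)) = u j * p n + (u (j + 1) - a 0 * u j) * q n := by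
  obtain ⟨hp0, hq0, hp1, hq1, hp, hq⟩ := hpq
  induction n using Nat.twoStepInduction with
  | zero =>
    rw [hp0, hq0, zero_add]
    push_cast
    ring
  | one =>
    have h1 : a (j + 2) = a 1 := by rw [← hper 1]; congr 1; omega
    rw [show 1 + (j + 1) = j + 2 by omega, hu, h1, hp1, hq1]
    push_cast
    ring
  | more n ih ih' =>
    have h2 : a (n + (j + 1) + 2) = a (n + 2) := by rw [← hper (n + 2)]; congr 1; omega
    rw [show n + 2 + (j + 1) = n + (j + 1) + 2 by omega, hu, h2,
      show n + (j + 1) + 1 = n + 1 + (j + 1) by omega, ih, ih', hp, hq]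
    push_cast
    ring

/-- If the continued fraction of `α` is purely periodic with period `k`, then
there are rationals `μ, μ', ν, ν'` with `p_n = μ q_n + μ' q_{n+k}` and
`q_n = ν p_n + ν' p_{n+k}` for all `n`. -/
theorem convergents_p_q_rational_relation
    (α : ℝ) (hα : 0 < α) (hirr : Irrational α)
    (a : ℕ → ℕ) (ha : IsCFExpansion α a)
    (p q : ℕ → ℕ) (hpq : IsConvergents a p q)
    (k : ℕ) (hk : 1 ≤ k) (hper : ∀ n : ℕ, a (n + k) = a n) :
    ∃ μ μ' ν ν' : ℚ, ∀ n : ℕ,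
      (p n : ℚ) = μ * (q n : ℚ) + μ' * (q (n + k) : ℚ) ∧
      (q n : ℚ) = ν * (p n : ℚ) + ν' * (p (n + k) : ℚ) := by
  obtain ⟨hp0, hq0, hp1, hq1, hp, hq⟩ := hpq
  obtain ⟨j, rfl⟩ : ∃ j, k = j + 1 := ⟨k - 1, by omega⟩
  have hpos : ∀ n, 0 < a n := fun n => by
    rw [← hper n]
    exact partialQuotient_succ_pos hirr ha (n + j)
  have hppos : ∀ n, 0 < p n := pos_of_recurrence (hp0 ▸ hpos 0) (by omega) hp
  have hqpos : ∀ n, 0 < q n := pos_of_recurrence (by omega) (hq1 ▸ hpos 1) hq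
  have hpq' : IsConvergents a p q := ⟨hp0, hq0, hp1, hq1, hp, hq⟩
  have hP := shift_eq hpq' j hper (u := fun n => (p n : ℚ)) fun n => by simp [hp]
  have hQ := shift_eq hpq' j hper (u := fun n => (q n : ℚ)) fun n => by simp [hq]
  have hA : (q j : ℚ) ≠ 0 := by have := hqpos j; positivity
  -- This coefficient is `p_{k-2}`, where `p_{-1} = 1` when `k = 1`.
  have hB : (p (j + 1) : ℚ) - a 0 * p j ≠ 0 := by
    have h0 : a (j + 1) = a 0 := by simpa using hper 0
    cases j with
    | zero =>
      rw [zero_add] at h0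
      simp [hp0, hp1, h0]
    | succ i =>
      have : (p i : ℚ) ≠ 0 := by exact_mod_cast (hppos i).ne'
      rw [hp i, h0]
      push_cast
      simpa using this
  refine ⟨-((q (j + 1) : ℚ) - a 0 * q j) / q j, 1 / q j,
    -(p j : ℚ) / ((p (j + 1) : ℚ) - a 0 * p j), 1 / ((p (j + 1) : ℚ) - a 0 * p j),
    fun n => ⟨?_, ?_⟩⟩
  · rw [hQ n]
    field_simp
    ring
  · rw [hP n]
    generalize (p (j + 1) : ℚ) - a 0 * p j = B at hB ⊢
    field_simp
    ring
end

section
/- Suppose a_{n+k} = a_n for all n ∈ ℕ (α is purely periodic with period k ≥ 1), and let P ≥ 2 be an integer. Then there exists m > 0 such that for every i ∈ ℕ, p_{mk+i} ≡ p_i (mod P) and q_{mk+i} ≡ q_i (mod P). -/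
/-- A solution of `u (n+2) = b (n+2) * u (n+1) + u n` whose coefficients have period `M`, and which
agrees with its shift by `M` at two consecutive indices, is itself `M`-periodic: the shift
solves the same recurrence, which determines a solution in both directions. -/
lemma recurrence_periodic_of_eq {R : Type*} [CommRing R] (b u : ℕ → R) (M : ℕ)
    (hb : ∀ n, b (M + n) = b n) (hu : ∀ n, u (n + 2) = b (n + 2) * u (n + 1) + u n)
    (j : ℕ) (h0 : u (M + j) = u j) (h1 : u (M + (j + 1)) = u (j + 1)) (i : ℕ) :
    u (M + i) = u i := by
  have hs : ∀ n, u (M + (n + 2)) = b (n + 2) * u (M + (n + 1)) + u (M + n) := by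
    intro n
    rw [← hb (n + 2)]
    exact hu (M + n)
  have base : u (M + 0) = u 0 ∧ u (M + 1) = u 1 := by
    induction j with
    | zero => exact ⟨h0, h1⟩
    | succ j ih =>
      refine ih ?_ h0
      have e := hs j
      rw [h1, h0, hu j] at e
      exact (add_left_cancel e).symm
  have key : u (M + i) = u i ∧ u (M + (i + 1)) = u (i + 1) := by
    induction i with
    | zero => exact base
    | succ i ih => exact ⟨ih.2, by rw [hs i, hu i, ih.1, ih.2]⟩
  exact key.1

/-- If the continued fraction of `α` is purely periodic with period `k`, and
`P ≥ 2`, then there is `m > 0` with `p_{mk+i} ≡ p_i` and `q_{mk+i} ≡ q_i (mod P)`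
for every `i`. -/
theorem convergents_periodic_mod
    (α : ℝ) (hα : 0 < α) (hirr : Irrational α)
    (a : ℕ → ℕ) (ha : IsCFExpansion α a)
    (p q : ℕ → ℕ) (hpq : IsConvergents a p q)
    (k : ℕ) (hk : 1 ≤ k) (hper : ∀ n : ℕ, a (n + k) = a n)
    (P : ℕ) (hP : 2 ≤ P) :
    ∃ m : ℕ, 0 < m ∧ ∀ i : ℕ,
      p (m * k + i) ≡ p i [MOD P] ∧ q (m * k + i) ≡ q i [MOD P] := by
  obtain ⟨-, -, -, -, hp, hq⟩ := hpq
  have : NeZero P := ⟨by omega⟩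
  have hmul : ∀ m n : ℕ, a (m * k + n) = a n := by
    intro m n
    induction m with
    | zero => simp
    | succ m ih => rw [← ih, ← hper (m * k + n)]; congr 1; ring
  let st : ℕ → (ZMod P × ZMod P) × (ZMod P × ZMod P) := fun n =>
    ((p (n * k), p (n * k + 1)), (q (n * k), q (n * k + 1)))
  obtain ⟨s, t, hst, heq⟩ : ∃ s t, s < t ∧ st s = st t := by
    obtain ⟨x, y, hne, h⟩ := Finite.exists_ne_map_eq_of_infinite st
    rcases lt_or_gt_of_ne hne with h' | h'
    · exact ⟨x, y, h', h⟩
    · exact ⟨y, x, h', h.symm⟩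
  obtain ⟨m, rfl⟩ := Nat.exists_eq_add_of_lt hst
  simp only [st, Prod.mk.injEq] at heq
  obtain ⟨⟨e1, e2⟩, e3, e4⟩ := heq
  have i0 : (s + m + 1) * k = (m + 1) * k + s * k := by ring
  rw [i0] at e1 e2 e3 e4
  refine ⟨m + 1, by omega, fun i => ⟨?_, ?_⟩⟩
  · rw [← ZMod.natCast_eq_natCast_iff]
    exact recurrence_periodic_of_eq (fun n => (a n : ZMod P)) (fun n => (p n : ZMod P))
      ((m + 1) * k) (fun n => by simp only [hmul]) (fun n => by simp only [hp]; push_cast; rfl)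
      (s * k) e1.symm e2.symm i
  · rw [← ZMod.natCast_eq_natCast_iff]
    exact recurrence_periodic_of_eq (fun n => (a n : ZMod P)) (fun n => (q n : ZMod P))
      ((m + 1) * k) (fun n => by simp only [hmul]) (fun n => by simp only [hq]; push_cast; rfl)
      (s * k) e3.symm e4.symm i
end

section
/- Let n ∈ ℕ and Z ∈ ℕ. Then [q_m](Z) = 0 for all m ≤ n if and only if there exists Z' ∈ ℕ such that αZ − Z' lies strictly between −β_n and −β_{n+1}, i.e., min(−β_n, −β_{n+1}) < αZ − Z' < max(−β_n, −β_{n+1}). Moreover, such Z' is unique whenever it exists. -/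
/-- `x` lies strictly between `u` and `v`. -/
def StrictlyBetween (x u v : ℝ) : Prop := min u v < x ∧ x < max u v

/-- The absolute values `γₙ = (-1)ⁿ βₙ` of the differences, with their recurrence. -/
lemma cf_gamma (α : ℝ) (hirr : Irrational α) (a : ℕ → ℕ) (ha : IsCFExpansion α a)
    (p q : ℕ → ℕ) (hpq : IsConvergents a p q) :
    ∃ γ : ℕ → ℝ, (∀ n, 0 < γ n) ∧ (∀ n, cfBeta α p q n = (-1) ^ n * γ n) ∧
      (∀ n, γ n = a (n + 2) * γ (n + 1) + γ (n + 2)) ∧ 1 = a 1 * γ 0 + γ 1 ∧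
      (∀ n, 1 ≤ a (n + 1)) := by
  obtain ⟨θ, h0, hθ⟩ := ha
  obtain ⟨hp0, hq0, hp1, hq1, hp, hq⟩ := hpq
  have hfl : ∀ n, ((⌊θ n⌋ : ℤ) : ℝ) = a n := fun n => by
    rw [← (hθ n).1]; simp
  have hθirr : ∀ n, Irrational (θ n) := by
    intro n
    induction n with
    | zero => rwa [h0]
    | succ k ih =>
      rw [(hθ k).2, one_div]
      exact (ih.sub_intCast _).inv
  have hf0 : ∀ n, 0 < θ n - a n := by
    intro n
    have h1 := Int.floor_le (θ n)
    rw [hfl] at h1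
    exact lt_of_le_of_ne (by linarith) ((hθirr n).sub_natCast (a n)).ne_zero.symm
  have hf1 : ∀ n, θ n - a n < 1 := by
    intro n
    have h1 := Int.lt_floor_add_one (θ n)
    rw [hfl] at h1
    linarith
  have hmul : ∀ n, (θ n - a n) * θ (n + 1) = 1 := by
    intro n
    rw [(hθ n).2, hfl]
    exact mul_one_div_cancel (hf0 n).ne'
  have ha1 : ∀ n, 1 ≤ a (n + 1) := by
    intro n
    have h1 : (1 : ℝ) < θ (n + 1) := by
      by_contra! h
      nlinarith [hmul n, hf0 n, hf1 n]
    have h2 : (1 : ℤ) ≤ ⌊θ (n + 1)⌋ := Int.le_floor.2 (by exact_mod_cast h1.le)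
    rw [← (hθ (n + 1)).1] at h2
    exact_mod_cast h2
  let γ : ℕ → ℝ := fun n => (-1) ^ n * cfBeta α p q n
  have hrec : ∀ n, γ n = a (n + 2) * γ (n + 1) + γ (n + 2) := by
    intro n
    simp only [γ, cfBeta, hp, hq, pow_succ]
    push_cast
    ring
  have hb0 : γ 0 = θ 0 - a 0 := by simp [γ, cfBeta, hp0, hq0, h0]
  have hb1 : γ 1 = 1 - a 1 * γ 0 := by
    simp [γ, cfBeta, hp0, hq0, hp1, hq1]; ring
  have hstep : ∀ n, 0 < γ n ∧ γ (n + 1) = γ n * (θ (n + 1) - a (n + 1)) := by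
    intro n
    induction n with
    | zero =>
      refine ⟨hb0 ▸ hf0 0, ?_⟩
      have := hmul 0
      rw [← hb0] at this
      simp only [zero_add] at this ⊢
      rw [hb1]; linarith
    | succ k ih =>
      refine ⟨ih.2 ▸ mul_pos ih.1 (hf0 _), ?_⟩
      have h1 : γ (k + 1) * θ (k + 2) = γ k := by
        rw [ih.2, mul_assoc, hmul (k + 1), mul_one]
      have := hrec k
      rw [show k + 1 + 1 = k + 2 from rfl]
      linarith
  refine ⟨γ, fun n => (hstep n).1, fun n => ?_, hrec, by linarith, ha1⟩
  simp only [γ]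
  rw [← mul_assoc, ← mul_pow]; simp

/-- Bounds on any solution `T` of `Tₘ = dₘ γₘ - Tₘ₊₁` that vanishes from `N` on; `T` stands for the
signed tails of `∑ dₖ βₖ`. Only the size of the digits matters here. -/
lemma tail_bounds_s9 (a d : ℕ → ℕ) (γ T : ℕ → ℝ) (N : ℕ)
    (hpos : ∀ n, 0 < γ n) (hrec : ∀ n, γ n = a (n + 2) * γ (n + 1) + γ (n + 2))
    (hd : ∀ n, d (n + 1) ≤ a (n + 2))
    (hT : ∀ m, T m = d m * γ m - T (m + 1)) (hN : ∀ m, N ≤ m → T m = 0) (m : ℕ) :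
    -γ (m + 1) < T (m + 1) ∧ T (m + 1) < γ m := by
  by_cases hm : N ≤ m
  · rw [hN _ (by omega)]
    exact ⟨by linarith [hpos (m + 1)], hpos m⟩
  · obtain ⟨h1, h2⟩ := tail_bounds_s9 a d γ T N hpos hrec hd hT hN (m + 1)
    rw [hT (m + 1)]
    have h3 : (0 : ℝ) ≤ d (m + 1) * γ (m + 1) := by have := hpos (m + 1); positivity
    have h4 : (d (m + 1) : ℝ) * γ (m + 1) ≤ a (m + 2) * γ (m + 1) :=
      mul_le_mul_of_nonneg_right (by exact_mod_cast hd m) (hpos _).le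
    have := hrec m
    rw [show m + 1 + 1 = m + 2 from rfl] at *
    constructor <;> linarith
termination_by N - m

/-- A nonzero digit pushes the tail above `γₖ₊₁`: the next digit is then not maximal. -/
lemma lt_tail_of_digit_ne_zero (a d : ℕ → ℕ) (γ T : ℕ → ℝ) (k : ℕ)
    (hpos : ∀ n, 0 < γ n) (hrec : ∀ n, γ n = a (n + 2) * γ (n + 1) + γ (n + 2))
    (hd : ∀ n, d (n + 1) ≤ a (n + 2)) (hd' : ∀ n, d (n + 1) = a (n + 2) → d n = 0)
    (hT : ∀ m, T m = d m * γ m - T (m + 1))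
    (hb : ∀ m, -γ (m + 1) < T (m + 1)) (hk : d k ≠ 0) : γ (k + 1) < T k := by
  have h1 : d (k + 1) + 1 ≤ a (k + 2) :=
    lt_of_le_of_ne (hd k) fun h => hk (hd' k h)
  have h1' : (d (k + 1) : ℝ) + 1 ≤ a (k + 2) := by exact_mod_cast h1
  have h2 : (1 : ℝ) ≤ d k := by exact_mod_cast Nat.one_le_iff_ne_zero.2 hk
  have h3 := mul_le_mul_of_nonneg_right h1' (hpos (k + 1)).le
  have h4 := mul_le_mul_of_nonneg_right h2 (hpos k).le
  have := hrec k
  have := hb (k + 1)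
  rw [hT k, hT (k + 1)]
  rw [show k + 1 + 1 = k + 2 from rfl] at *
  linarith

lemma strictlyBetween_iff (x u v : ℝ) (n : ℕ) (hu : 0 < u) (hv : 0 < v) :
    StrictlyBetween x (-((-1) ^ n * u)) (-((-1) ^ (n + 1) * v)) ↔
      -v < (-1) ^ (n + 1) * x ∧ (-1) ^ (n + 1) * x < u := by
  unfold StrictlyBetween
  rcases neg_one_pow_eq_or ℝ n with h | h
  · simp only [pow_succ, h]
    rw [min_eq_left (by linarith), max_eq_right (by linarith)]
    constructor <;> rintro ⟨h1, h2⟩ <;> constructor <;> linarith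
  · simp only [pow_succ, h]
    rw [min_eq_right (by linarith), max_eq_left (by linarith)]
    constructor <;> rintro ⟨h1, h2⟩ <;> constructor <;> linarith

/-- `[q_m](Z) = 0` for all `m ≤ n` iff there is `Z' ∈ ℕ` with `α Z − Z'` strictly
between `−β_n` and `−β_{n+1}`; moreover such a `Z'` is unique. -/
theorem ostrowski_after_characterization
    (α : ℝ) (hα : 0 < α) (hirr : Irrational α)
    (a : ℕ → ℕ) (ha : IsCFExpansion α a)
    (p q : ℕ → ℕ) (hpq : IsConvergents a p q)
    (ost : ℕ → ℕ → ℕ) (host : ∀ X : ℕ, IsOstrowskiRep a q X (ost X))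
    (n Z : ℕ) :
    ((∀ m : ℕ, m ≤ n → ost Z m = 0) ↔
      ∃ Z' : ℕ, StrictlyBetween (α * (Z : ℝ) - (Z' : ℝ))
        (-(cfBeta α p q n)) (-(cfBeta α p q (n + 1)))) ∧
    (∀ Z' Z'' : ℕ,
      StrictlyBetween (α * (Z : ℝ) - (Z' : ℝ))
        (-(cfBeta α p q n)) (-(cfBeta α p q (n + 1))) →
      StrictlyBetween (α * (Z : ℝ) - (Z'' : ℝ))
        (-(cfBeta α p q n)) (-(cfBeta α p q (n + 1))) →
      Z' = Z'') := by
  obtain ⟨γ, hpos, hβ, hrec, hone, ha1⟩ := cf_gamma α hirr a ha p q hpq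
  obtain ⟨hd0, hd, hd', N, hN, hZ⟩ := host Z
  generalize ost Z = d at *
  have hle : ∀ n, γ (n + 1) + γ (n + 2) ≤ γ n := fun n => by
    have h1 : (1 : ℝ) ≤ a (n + 2) := by exact_mod_cast ha1 (n + 1)
    nlinarith [hrec n, hpos (n + 1)]
  have hlen : ∀ n, γ n + γ (n + 1) ≤ 1 := by
    intro n
    induction n with
    | zero =>
      have h1 : (1 : ℝ) ≤ a 1 := by exact_mod_cast ha1 0
      nlinarith [hpos 0]
    | succ k ih => linarith [hle k, hpos (k + 1)]
  simp only [hβ, strictlyBetween_iff _ _ _ _ (hpos _) (hpos _)]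
  have hnoint : ∀ z : ℤ, 0 < (z : ℝ) → (z : ℝ) < 1 → False := by
    intro z h1 h2
    have h1' : 0 < z := by exact_mod_cast h1
    have h2' : z < 1 := by exact_mod_cast h2
    omega
  have hsum : ∃ W : ℕ, ∑ k ∈ Finset.range N, (d k : ℝ) * cfBeta α p q k = α * Z - W := by
    refine ⟨∑ k ∈ Finset.range N, d k * p k, ?_⟩
    rw [hZ]
    push_cast
    rw [Finset.mul_sum, ← Finset.sum_sub_distrib]
    exact Finset.sum_congr rfl fun k _ => by unfold cfBeta; ring
  obtain ⟨W, hW⟩ := hsum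
  let T : ℕ → ℝ := fun m =>
    (-1) ^ m * (α * Z - W - ∑ k ∈ Finset.range m, (d k : ℝ) * cfBeta α p q k)
  have hT : ∀ m, T m = d m * γ m - T (m + 1) := by
    intro m
    simp only [T, Finset.sum_range_succ, hβ m, pow_succ]
    rcases neg_one_pow_eq_or ℝ m with h | h <;> rw [h] <;> ring
  have hTN : ∀ m, N ≤ m → T m = 0 := by
    intro m hm
    have : ∑ k ∈ Finset.range m, (d k : ℝ) * cfBeta α p q k
        = ∑ k ∈ Finset.range N, (d k : ℝ) * cfBeta α p q k := by
      refine (Finset.sum_subset (Finset.range_mono hm) fun k _ hk => ?_).symm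
      rw [hN k (by simpa using hk)]; simp
    simp only [T, this, hW]; ring
  have hTz : ∀ m, (∀ k < m, d k = 0) → T m = (-1) ^ m * (α * Z - W) := by
    intro m hm
    simp only [T]
    rw [Finset.sum_eq_zero fun k hk => by rw [hm k (by simpa using hk)]; simp, sub_zero]
  have hb := tail_bounds_s9 a d γ T N hpos hrec hd hT hTN
  refine ⟨⟨fun h => ⟨W, ?_⟩, ?_⟩, ?_⟩
  · rw [← hTz (n + 1) fun k hk => h k (by omega)]
    exact hb n
  · rintro ⟨V, hV⟩
    by_contra! hne
    have hex : ∃ k, d k ≠ 0 := by obtain ⟨m, _, hm⟩ := hne; exact ⟨m, hm⟩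
    classical
    obtain ⟨k, hkn, hk, hmin⟩ : ∃ k ≤ n, d k ≠ 0 ∧ ∀ j < k, d j = 0 := by
      refine ⟨Nat.find hex, ?_, Nat.find_spec hex, fun j hj => ?_⟩
      · obtain ⟨m, hm, hm'⟩ := hne
        exact (Nat.find_min' hex hm').trans hm
      · simpa using Nat.find_min hex hj
    -- The intervals are nested, so `V` also works at index `k`.
    have hVk : -γ (k + 1) < (-1) ^ (k + 1) * (α * Z - V) ∧
        (-1) ^ (k + 1) * (α * Z - V) < γ k := by
      clear hne
      induction n, hkn using Nat.le_induction with
      | base => exact hV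
      | succ j _ ih =>
        apply ih
        obtain ⟨h1, h2⟩ := hV
        rw [pow_succ, mul_neg_one, neg_mul] at h1 h2
        have := hle j
        have := hpos (j + 1)
        have := hpos (j + 2)
        rw [show j + 1 + 1 = j + 2 from rfl] at *
        constructor <;> linarith
    have hlow := lt_tail_of_digit_ne_zero a d γ T k hpos hrec hd hd' hT (fun m => (hb m).1) hk
    have hup : T k < 1 - γ k := by
      cases k with
      | zero =>
        have h1 : (d 0 : ℝ) + 1 ≤ a 1 := by exact_mod_cast hd0
        have h2 := mul_le_mul_of_nonneg_right h1 (hpos 0).le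
        have h3 := (hb 0).1
        rw [hT 0]
        simp only [zero_add] at *
        linarith
      | succ j => linarith [(hb j).2, hlen j]
    rw [hTz k hmin] at hlow hup
    rw [pow_succ, mul_neg_one, neg_mul] at hVk
    obtain ⟨h1, h2⟩ := hVk
    apply hnoint ((-1) ^ k * ((V : ℤ) - W))
    · push_cast; linarith
    · push_cast; linarith
  · rintro U V ⟨hU1, hU2⟩ ⟨hV1, hV2⟩
    have := hlen n
    rcases lt_trichotomy U V with h | h | h
    · exfalso
      have h' : (U : ℝ) + 1 ≤ V := by exact_mod_cast h
      rcases neg_one_pow_eq_or ℝ (n + 1) with e | e <;> rw [e] at hU1 hU2 hV1 hV2 <;> linarith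
    · exact h
    · exfalso
      have h' : (V : ℝ) + 1 ≤ U := by exact_mod_cast h
      rcases neg_one_pow_eq_or ℝ (n + 1) with e | e <;> rw [e] at hU1 hU2 hV1 hV2 <;> linarith
end

section
/- Let n ∈ ℕ and Z ∈ ℕ. Then ([q_m](Z) = 0 for all m ≤ n and [q_{n+1}](Z) < a_{n+2}) if and only if there exists Z' ∈ ℕ such that αZ − Z' lies strictly between −β_{n+1} and −β_n − β_{n+1}, i.e., min(−β_{n+1}, −β_n − β_{n+1}) < αZ − Z' < max(−β_{n+1}, −β_n − β_{n+1}). Moreover, such Z' is unique whenever it exists. -/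
/-! ### The absolute values of the differences -/

/-- The complete quotients stay irrational, so their fractional parts never vanish and all
complete quotients after the first exceed `1`. -/
lemma completeQuotient_facts {α : ℝ} (hirr : Irrational α) {a : ℕ → ℕ} {θ : ℕ → ℝ}
    (h0 : θ 0 = α) (hθ : ∀ n : ℕ, (a n : ℤ) = ⌊θ n⌋ ∧ θ (n + 1) = 1 / (θ n - (⌊θ n⌋ : ℝ)))
    (n : ℕ) :
    0 < θ n - a n ∧ θ (n + 1) = 1 / (θ n - a n) ∧ 1 ≤ a (n + 1) := by
  have irr : ∀ n, Irrational (θ n) := by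
    intro n
    induction n with
    | zero => rwa [h0]
    | succ k ih =>
      rw [(hθ k).2, one_div]
      exact (ih.sub_intCast _).inv
  have cast : ∀ n, ((a n : ℕ) : ℝ) = (⌊θ n⌋ : ℝ) := fun n => by
    rw [← (hθ n).1]; simp
  have pos : 0 < θ n - a n := by
    have h1 : (a n : ℝ) ≤ θ n := by rw [cast]; exact Int.floor_le _
    have h2 : θ n ≠ a n := (irr n).ne_nat _
    exact sub_pos.2 (lt_of_le_of_ne h1 (Ne.symm h2))
  have eq : θ (n + 1) = 1 / (θ n - a n) := by rw [cast]; exact (hθ n).2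
  refine ⟨pos, eq, ?_⟩
  have lt : θ n - a n < 1 := by rw [cast]; linarith [Int.lt_floor_add_one (θ n)]
  have h1 : (1 : ℝ) ≤ θ (n + 1) := by
    rw [eq, le_div_iff₀ pos]; linarith
  have h2 : (1 : ℤ) ≤ ⌊θ (n + 1)⌋ := Int.le_floor.2 (by simpa using h1)
  rw [← (hθ (n + 1)).1] at h2
  exact_mod_cast h2

/-- The sequence `|β_{m-1}|`, shifted so that index `0` stands for `β_{-1} = -1`. -/
noncomputable def absBeta (α : ℝ) (p q : ℕ → ℕ) : ℕ → ℝ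
  | 0 => 1
  | m + 1 => (-1) ^ m * cfBeta α p q m

lemma absBeta_rec {α : ℝ} {a p q : ℕ → ℕ} (hpq : IsConvergents a p q) (m : ℕ) :
    absBeta α p q m = a (m + 1) * absBeta α p q (m + 1) + absBeta α p q (m + 2) := by
  obtain ⟨p0, q0, p1, q1, hp, hq⟩ := hpq
  cases m with
  | zero => simp [absBeta, cfBeta, p0, q0, p1, q1]; ring
  | succ k =>
    simp only [absBeta, cfBeta, hp, hq]
    push_cast
    ring

/-- Positivity comes from the identity `|β_{m-1}| = θ_{m+1} |β_m|` with the complete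
quotient `θ_{m+1}`. -/
lemma absBeta_pos {α : ℝ} (hirr : Irrational α) {a p q : ℕ → ℕ} (ha : IsCFExpansion α a)
    (hpq : IsConvergents a p q) (m : ℕ) : 0 < absBeta α p q m := by
  obtain ⟨θ, h0, hθ⟩ := ha
  have facts := completeQuotient_facts hirr h0 hθ
  have key : ∀ m, 0 < absBeta α p q (m + 1) ∧
      absBeta α p q m = θ (m + 1) * absBeta α p q (m + 1) := by
    intro m
    induction m with
    | zero =>
      obtain ⟨pos, eq, -⟩ := facts 0
      have hB : absBeta α p q (0 + 1) = θ 0 - a 0 := by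
        simp [absBeta, cfBeta, hpq.1, hpq.2.1, h0]
      rw [hB, eq]
      refine ⟨pos, ?_⟩
      simp only [absBeta]
      field_simp
    | succ k ih =>
      obtain ⟨pos, eq, -⟩ := facts (k + 1)
      have hB : absBeta α p q (k + 1 + 1) = (θ (k + 1) - a (k + 1)) * absBeta α p q (k + 1) := by
        linarith [absBeta_rec (α := α) hpq k, ih.2]
      rw [hB, eq]
      refine ⟨mul_pos pos ih.1, ?_⟩
      field_simp
  cases m with
  | zero => simp [absBeta]
  | succ k => exact (key k).1

/-! ### Bounds for signed tails -/

/-- The common setting of the tail estimates: `B` plays the role of `m ↦ |β_{m-1}|`, `d` of a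
sequence of Ostrowski digits, and `S m` of `(-1)^m ∑_{k ≥ m} d_k β_k`. -/
structure TailData (a d : ℕ → ℕ) (B S : ℕ → ℝ) : Prop where
  pos : ∀ m, 0 < B m
  rec_B : ∀ m, B m = a (m + 1) * B (m + 1) + B (m + 2)
  one_le : ∀ m, 1 ≤ a (m + 1)
  le : ∀ m, d m ≤ a (m + 1)
  carry : ∀ m, d (m + 1) = a (m + 2) → d m = 0
  rec_S : ∀ m, S m = d m * B (m + 1) - S (m + 1)
  fin : ∃ N, ∀ m, N ≤ m → d m = 0 ∧ S m = 0

namespace TailData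

variable {a d : ℕ → ℕ} {B S : ℕ → ℝ}

lemma succ_lt (h : TailData a d B S) (m : ℕ) : B (m + 1) < B m := by
  have h1 : (1 : ℝ) ≤ a (m + 1) := by exact_mod_cast h.one_le m
  nlinarith [h.rec_B m, h.pos (m + 1), h.pos (m + 2)]

lemma anti (h : TailData a d B S) : Antitone B :=
  antitone_nat_of_succ_le fun m => (h.succ_lt m).le

/-- A nonzero digit is followed by a non-maximal one. -/
lemma next_lt (h : TailData a d B S) {m : ℕ} (hm : d m ≠ 0) : d (m + 1) < a (m + 2) :=
  lt_of_le_of_ne (h.le (m + 1)) fun e => hm (h.carry m e)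

lemma tail_bounds (h : TailData a d B S) (m : ℕ) :
    -B (m + 1) < S m ∧ S m < B m ∧ (d m < a (m + 1) → S m < B m - B (m + 1)) := by
  obtain ⟨N, hN⟩ := h.fin
  have large : ∀ m, N ≤ m →
      -B (m + 1) < S m ∧ S m < B m ∧ (d m < a (m + 1) → S m < B m - B (m + 1)) := by
    intro m hm
    rw [(hN m hm).2]
    exact ⟨by linarith [h.pos (m + 1)], h.pos m, fun _ => by linarith [h.succ_lt m]⟩
  rcases le_total N m with hm | hm
  · exact large m hm
  induction hm using Nat.decreasingInduction with
  | self => exact large N le_rfl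
  | of_succ k hk ih =>
    obtain ⟨lo, hi, hi'⟩ := ih
    have hB := h.rec_B k
    have hB1 := h.pos (k + 1)
    rw [h.rec_S k]
    refine ⟨?_, ?_, fun hd => ?_⟩
    · rcases Nat.eq_zero_or_pos (d k) with h0 | h0
      · rw [h0]; push_cast; linarith
      · have h1 : (1 : ℝ) ≤ d k := by exact_mod_cast h0
        have h2 := hi' (h.next_lt h0.ne')
        nlinarith [h.pos (k + 2)]
    · have h1 : (d k : ℝ) ≤ a (k + 1) := by exact_mod_cast h.le k
      nlinarith
    · have h1 : (d k : ℝ) + 1 ≤ a (k + 1) := by exact_mod_cast hd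
      nlinarith

lemma tail_gt_of_ne_zero (h : TailData a d B S) {m : ℕ} (hm : d m ≠ 0) : B (m + 2) < S m := by
  have h1 : (1 : ℝ) ≤ d m := by exact_mod_cast Nat.pos_of_ne_zero hm
  have h2 := (h.tail_bounds (m + 1)).2.2 (h.next_lt hm)
  rw [h.rec_S m]
  nlinarith [h.pos (m + 1)]

lemma tail_gt_of_eq (h : TailData a d B S) {m : ℕ} (hm : d m = a (m + 1)) :
    B m - B (m + 1) < S m := by
  have h0 : d m ≠ 0 := by have := h.one_le m; omega
  have h2 := (h.tail_bounds (m + 1)).2.2 (h.next_lt h0)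
  rw [h.rec_S m, hm]
  linarith [h.rec_B m, h.pos (m + 1)]

lemma tail_eq_of_zero (h : TailData a d B S) (m : ℕ) (hm : ∀ i < m, d i = 0) :
    S 0 = (-1) ^ m * S m := by
  induction m with
  | zero => simp
  | succ k ih =>
    rw [ih fun i hi => hm i (by omega), h.rec_S k, hm k (by omega)]
    push_cast
    ring

/-- The full sum lies in the interval of index `n` exactly when the digits up to `n` vanish and
the next one is not maximal. -/
lemma mem_interval_iff (h : TailData a d B S) (n : ℕ) :
    ((∀ m : ℕ, m ≤ n → d m = 0) ∧ d (n + 1) < a (n + 2)) ↔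
      -B (n + 2) < (-1) ^ (n + 1) * S 0 ∧ (-1) ^ (n + 1) * S 0 < B (n + 1) - B (n + 2) := by
  have sq : ∀ k : ℕ, ((-1 : ℝ) ^ k) * (-1) ^ k = 1 := fun k => by
    rw [← mul_pow]; norm_num
  have full : (∀ m : ℕ, m ≤ n → d m = 0) → (-1) ^ (n + 1) * S 0 = S (n + 1) := fun hz => by
    rw [h.tail_eq_of_zero (n + 1) fun i hi => hz i (by omega), ← mul_assoc, sq, one_mul]
  constructor
  · rintro ⟨hz, hlt⟩
    rw [full hz]
    exact ⟨(h.tail_bounds (n + 1)).1, (h.tail_bounds (n + 1)).2.2 hlt⟩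
  · rintro ⟨lo, hi⟩
    have hz : ∀ m : ℕ, m ≤ n → d m = 0 := by
      intro m
      induction m using Nat.strong_induction_on with
      | _ j ih =>
        intro hj
        by_contra hne
        have h1 := h.tail_gt_of_ne_zero hne
        rw [h.tail_eq_of_zero j fun i hi => ih i hi (by omega), ← mul_assoc, ← pow_add] at lo hi
        rcases Nat.even_or_odd (n + 1 + j) with he | ho
        · -- Opposite parities of `j` and `n` force `j < n`, and the sum exceeds the upper end.
          have : j + 2 ≤ n + 1 := by
            rcases hj.lt_or_eq with hj | rfl
            · omega
            · exact absurd he (by rw [Nat.not_even_iff_odd]; exact ⟨j, by ring⟩)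
          rw [he.neg_one_pow] at hi
          linarith [h.anti this, h.pos (n + 2)]
        · rw [ho.neg_one_pow] at lo
          linarith [h.anti (show j + 2 ≤ n + 2 by omega)]
    refine ⟨hz, lt_of_le_of_ne (h.le (n + 1)) fun e => ?_⟩
    rw [full hz] at hi
    linarith [h.tail_gt_of_eq e]

/-- The interval of index `n` lies in an interval of length `1` common to all `n`. -/
lemma interval_subset (h : TailData a d B S) (n : ℕ) {y : ℝ}
    (lo : -B (n + 2) < (-1) ^ (n + 1) * y) (hi : (-1) ^ (n + 1) * y < B (n + 1) - B (n + 2)) :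
    -B 1 < y ∧ y < B 0 - B 1 := by
  have h1 : (1 : ℝ) ≤ a 1 := by exact_mod_cast h.one_le 0
  have h2 : B 1 + B 2 ≤ B 0 := by
    have := h.rec_B 0
    simp only [zero_add] at this
    nlinarith [h.pos 1]
  have h3 := h.anti (show 1 ≤ n + 1 by omega)
  have h4 := h.anti (show 2 ≤ n + 2 by omega)
  have h5 := h.pos (n + 2)
  rcases Nat.even_or_odd (n + 1) with he | ho
  · rw [he.neg_one_pow] at lo hi
    have h6 : 2 ≤ n + 1 := by
      obtain ⟨r, hr⟩ := he
      omega
    have := h.anti h6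
    constructor <;> linarith [h.succ_lt 1]
  · rw [ho.neg_one_pow] at lo hi
    constructor <;> linarith

end TailData

/-! ### Ostrowski digits and the interval of the theorem -/

/-- `Z` is represented by its digits, so `α Z - ∑ d_k p_k = S 0` for tails `S` as in `TailData`. -/
lemma exists_tailData {α : ℝ} (hirr : Irrational α) {a p q d : ℕ → ℕ} (ha : IsCFExpansion α a)
    (hpq : IsConvergents a p q) {Z : ℕ} (hd : IsOstrowskiRep a q Z d) :
    ∃ (S : ℕ → ℝ) (W : ℕ), TailData a d (absBeta α p q) S ∧ S 0 = α * Z - W := by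
  obtain ⟨d0, dle, dcarry, N, hN, hZ⟩ := hd
  have one_le : ∀ m, 1 ≤ a (m + 1) := by
    obtain ⟨θ, h0, hθ⟩ := ha
    exact fun m => (completeQuotient_facts hirr h0 hθ m).2.2
  refine ⟨fun m => (-1) ^ m * ∑ k ∈ Finset.Ico m N, (d k : ℝ) * cfBeta α p q k,
    ∑ k ∈ Finset.range N, d k * p k, ?_, ?_⟩
  · refine ⟨absBeta_pos hirr ha hpq, absBeta_rec hpq, one_le, ?_, dcarry, ?_, N, ?_⟩
    · rintro (_ | m)
      · exact d0.le
      · exact dle m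
    · intro m
      simp only [absBeta]
      rcases lt_or_ge m N with hm | hm
      · rw [Finset.sum_eq_sum_Ico_succ_bot hm]
        ring
      · rw [Finset.Ico_eq_empty_of_le hm, Finset.Ico_eq_empty_of_le (by omega), hN m hm]
        simp
    · intro m hm
      exact ⟨hN m hm, by simp [Finset.Ico_eq_empty_of_le hm]⟩
  · rw [hZ]
    simp only [pow_zero, one_mul, cfBeta, ← Finset.range_eq_Ico]
    push_cast
    rw [Finset.mul_sum, ← Finset.sum_sub_distrib]
    exact Finset.sum_congr rfl fun k _ => by ring

/-- The interval of the theorem, in terms of `absBeta` and normalised by the sign. -/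
lemma strictlyBetween_iff_s10 {α : ℝ} {p q : ℕ → ℕ} (n : ℕ) (hpos : 0 < absBeta α p q (n + 1))
    (x : ℝ) :
    StrictlyBetween x (-(cfBeta α p q (n + 1))) (-(cfBeta α p q n) - cfBeta α p q (n + 1)) ↔
      -absBeta α p q (n + 2) < (-1) ^ (n + 1) * x ∧
        (-1) ^ (n + 1) * x < absBeta α p q (n + 1) - absBeta α p q (n + 2) := by
  simp only [StrictlyBetween, absBeta] at *
  rcases Nat.even_or_odd n with he | ho
  · rw [pow_succ, he.neg_one_pow] at *
    rw [min_eq_right (by linarith), max_eq_left (by linarith)]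
    constructor <;> rintro ⟨h1, h2⟩ <;> constructor <;> linarith
  · rw [pow_succ, ho.neg_one_pow] at *
    rw [min_eq_left (by linarith), max_eq_right (by linarith)]
    constructor <;> rintro ⟨h1, h2⟩ <;> constructor <;> linarith

/-- Two points of an open unit interval that are both congruent to `x` modulo `1` coincide. -/
lemma natCast_eq_of_mem_unit {x c : ℝ} {k l : ℕ} (hk : c < x - k ∧ x - k < c + 1)
    (hl : c < x - l ∧ x - l < c + 1) : k = l := by
  have h1 : (k : ℝ) < l + 1 := by linarith [hk.1, hl.2]
  have h2 : (l : ℝ) < k + 1 := by linarith [hk.2, hl.1]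
  have h3 : k < l + 1 := by exact_mod_cast h1
  have h4 : l < k + 1 := by exact_mod_cast h2
  omega

/-- `[q_m](Z) = 0` for all `m ≤ n` and `[q_{n+1}](Z) < a_{n+2}` iff there is
`Z' ∈ ℕ` with `α Z − Z'` strictly between `−β_{n+1}` and `−β_n − β_{n+1}`;
moreover such a `Z'` is unique. -/
theorem ostrowski_after_tilde_characterization
    (α : ℝ) (hα : 0 < α) (hirr : Irrational α)
    (a : ℕ → ℕ) (ha : IsCFExpansion α a)
    (p q : ℕ → ℕ) (hpq : IsConvergents a p q)
    (ost : ℕ → ℕ → ℕ) (host : ∀ X : ℕ, IsOstrowskiRep a q X (ost X))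
    (n Z : ℕ) :
    (((∀ m : ℕ, m ≤ n → ost Z m = 0) ∧ ost Z (n + 1) < a (n + 2)) ↔
      ∃ Z' : ℕ, StrictlyBetween (α * (Z : ℝ) - (Z' : ℝ))
        (-(cfBeta α p q (n + 1))) (-(cfBeta α p q n) - cfBeta α p q (n + 1))) ∧
    (∀ Z' Z'' : ℕ,
      StrictlyBetween (α * (Z : ℝ) - (Z' : ℝ))
        (-(cfBeta α p q (n + 1))) (-(cfBeta α p q n) - cfBeta α p q (n + 1)) →
      StrictlyBetween (α * (Z : ℝ) - (Z'' : ℝ))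
        (-(cfBeta α p q (n + 1))) (-(cfBeta α p q n) - cfBeta α p q (n + 1)) →
      Z' = Z'') := by
  obtain ⟨S, W, hT, hS⟩ := exists_tailData hirr ha hpq (host Z)
  have hB0 : absBeta α p q 0 = 1 := rfl
  have unit : ∀ Z' : ℕ, StrictlyBetween (α * (Z : ℝ) - (Z' : ℝ))
      (-(cfBeta α p q (n + 1))) (-(cfBeta α p q n) - cfBeta α p q (n + 1)) →
      -absBeta α p q 1 < α * Z - Z' ∧ α * Z - Z' < -absBeta α p q 1 + 1 := by
    intro Z' h
    rw [strictlyBetween_iff_s10 n (hT.pos _)] at h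
    have := hT.interval_subset n h.1 h.2
    exact ⟨this.1, by linarith [this.2]⟩
  refine ⟨?_, fun Z' Z'' h' h'' => natCast_eq_of_mem_unit (unit Z' h') (unit Z'' h'')⟩
  rw [hT.mem_interval_iff n, hS, ← strictlyBetween_iff_s10 n (hT.pos _)]
  refine ⟨fun h => ⟨W, h⟩, ?_⟩
  rintro ⟨Z', h⟩
  have hlow := hT.tail_bounds 0
  have hupp := hlow.2.2 (host Z).1
  rw [hS] at hlow hupp
  have e : Z' = W := natCast_eq_of_mem_unit (unit Z' h) ⟨hlow.1, by linarith⟩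
  rwa [← e]
end

section
/- Let n ∈ ℕ and X, Z ∈ ℕ be such that [q_m](X) = 0 for all m > n, [q_m](Z) = 0 for all m ≤ n, and such that [q_{n+1}](Z) < a_{n+2} whenever [q_n](X) > 0. Then the Ostrowski digits of X + Z are obtained by concatenation: [q_m](X + Z) = [q_m](X) for all m ≤ n, and [q_m](X + Z) = [q_m](Z) for all m > n. -/
/-- The digits below `m` of an Ostrowski representation contribute less than `q m`. -/
lemma IsOstrowskiRep.partial_lt {a p q : ℕ → ℕ} (hpq : IsConvergents a p q) {X : ℕ} {d : ℕ → ℕ}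
    (hd : IsOstrowskiRep a q X d) (m : ℕ) : ∑ k ∈ Finset.range m, d k * q k < q m := by
  obtain ⟨-, hq0, -, hq1, -, hq⟩ := hpq
  obtain ⟨hd0, hle, hcarry, -⟩ := hd
  induction m using Nat.strong_induction_on with
  | _ m ih =>
    match m with
    | 0 => simp [hq0]
    | 1 => simpa [hq0, hq1] using hd0
    | m + 2 =>
      rw [Finset.sum_range_succ, hq]
      rcases (hle m).eq_or_lt with h | h
      · -- A maximal digit forces `d m = 0`, so only the digits below `m` remain, and they sum
        -- to less than the summand `q m` of `q (m + 2)`.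
        have h1 := ih m (by omega)
        rw [Finset.sum_range_succ, hcarry m h, h]
        omega
      · have h1 := ih (m + 1) (by omega)
        have h2 : (d (m + 1) + 1) * q (m + 1) ≤ a (m + 2) * q (m + 1) :=
          Nat.mul_le_mul_right _ h
        rw [add_mul, one_mul] at h2
        omega

lemma IsOstrowskiRep.eventually_sum {a q : ℕ → ℕ} {X : ℕ} {d : ℕ → ℕ}
    (hd : IsOstrowskiRep a q X d) :
    ∃ N, ∀ M, N ≤ M → d M = 0 ∧ X = ∑ k ∈ Finset.range M, d k * q k := by
  obtain ⟨-, -, -, N, hN, hsum⟩ := hd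
  refine ⟨N, fun M hM => ⟨hN M hM, hsum.trans ?_⟩⟩
  refine Finset.sum_subset (Finset.range_mono hM) fun k _ hk => ?_
  rw [hN k (by simpa using hk), zero_mul]

lemma IsOstrowskiRep.digits_eq_of_partial_eq {a p q : ℕ → ℕ} (hpq : IsConvergents a p q)
    {X Y : ℕ} {d e : ℕ → ℕ} (hd : IsOstrowskiRep a q X d) (he : IsOstrowskiRep a q Y e) (m : ℕ)
    (h : ∑ k ∈ Finset.range m, d k * q k = ∑ k ∈ Finset.range m, e k * q k) :
    ∀ k < m, d k = e k := by
  induction m with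
  | zero => intro k hk; omega
  | succ m ih =>
    have h1 := hd.partial_lt hpq m
    have h2 := he.partial_lt hpq m
    rw [Finset.sum_range_succ, Finset.sum_range_succ] at h
    -- Both top digits are the quotient of the common sum by `q m`.
    have htop : d m = e m := by
      have hdiv := congrArg (· / q m) h
      simpa [Nat.add_mul_div_right _ _ (Nat.zero_lt_of_lt h1), Nat.div_eq_of_lt h1,
        Nat.div_eq_of_lt h2] using hdiv
    rw [htop] at h
    intro k hk
    rcases Nat.lt_succ_iff_lt_or_eq.mp hk with hk | rfl
    · exact ih (Nat.add_right_cancel h) k hk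
    · exact htop

/-- Uniqueness of Ostrowski representations. -/
lemma IsOstrowskiRep.unique {a p q : ℕ → ℕ} (hpq : IsConvergents a p q)
    {X : ℕ} {d e : ℕ → ℕ} (hd : IsOstrowskiRep a q X d) (he : IsOstrowskiRep a q X e) (m : ℕ) :
    d m = e m := by
  obtain ⟨N, hN⟩ := hd.eventually_sum
  obtain ⟨M, hM⟩ := he.eventually_sum
  exact hd.digits_eq_of_partial_eq hpq he (N + M + m + 1)
    ((hN _ (by omega)).2.symm.trans (hM _ (by omega)).2) m (by omega)

/-- Under the compatibility condition at `n`, the concatenation of the digits of `X` and `Z`,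
written as their pointwise sum, represents `X + Z`. -/
lemma IsOstrowskiRep.concat {a q : ℕ → ℕ} {X Z n : ℕ} {d e : ℕ → ℕ}
    (hd : IsOstrowskiRep a q X d) (he : IsOstrowskiRep a q Z e)
    (hX : ∀ m, n < m → d m = 0) (hZ : ∀ m, m ≤ n → e m = 0)
    (hcomp : 0 < d n → e (n + 1) < a (n + 2)) :
    IsOstrowskiRep a q (X + Z) (fun m => d m + e m) := by
  obtain ⟨N, hN⟩ := hd.eventually_sum
  obtain ⟨M, hM⟩ := he.eventually_sum
  obtain ⟨hd0, hdle, hdc, -⟩ := hd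
  obtain ⟨-, hele, hec, -⟩ := he
  refine ⟨?_, fun m => ?_, fun m h => ?_, N + M, fun m hm => ?_, ?_⟩
  · simpa [hZ 0 n.zero_le] using hd0
  · rcases le_or_gt (m + 1) n with hm | hm
    · simpa [hZ _ hm] using hdle m
    · simpa [hX _ hm] using hele m
  · dsimp only at h ⊢
    rcases lt_trichotomy m n with hm | rfl | hm
    · rw [hZ _ hm] at h
      rw [hZ _ hm.le, hdc m h]
    · rw [hX _ m.lt_succ_self, zero_add] at h
      rw [hZ m le_rfl, add_zero]
      by_contra h0
      exact (hcomp (Nat.pos_of_ne_zero h0)).ne h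
    · rw [hX _ (by omega), zero_add] at h
      rw [hX _ hm, hec m h]
  · simp [(hN m (by omega)).1, (hM m (by omega)).1]
  · simp only [add_mul, Finset.sum_add_distrib]
    rw [← (hN _ (Nat.le_add_right N M)).2, ← (hM _ (Nat.le_add_left M N)).2]

/-- Concatenation of Ostrowski representations: if all digits of `X` above `n`
vanish, all digits of `Z` up to `n` vanish, and `[q_{n+1}](Z) < a_{n+2}`
whenever `[q_n](X) > 0`, then the digits of `X + Z` are those of `X` up to `n`
and those of `Z` above `n`. -/
theorem ostrowski_concat
    (α : ℝ) (hα : 0 < α) (hirr : Irrational α)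
    (a : ℕ → ℕ) (ha : IsCFExpansion α a)
    (p q : ℕ → ℕ) (hpq : IsConvergents a p q)
    (ost : ℕ → ℕ → ℕ) (host : ∀ X : ℕ, IsOstrowskiRep a q X (ost X))
    (n X Z : ℕ)
    (hX : ∀ m : ℕ, n < m → ost X m = 0)
    (hZ : ∀ m : ℕ, m ≤ n → ost Z m = 0)
    (hcomp : 0 < ost X n → ost Z (n + 1) < a (n + 2)) :
    (∀ m : ℕ, m ≤ n → ost (X + Z) m = ost X m) ∧
    (∀ m : ℕ, n < m → ost (X + Z) m = ost Z m) := by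
  have key : ∀ m, ost (X + Z) m = ost X m + ost Z m :=
    (host (X + Z)).unique hpq ((host X).concat (host Z) hX hZ hcomp)
  exact ⟨fun m hm => by rw [key, hZ m hm, add_zero], fun m hm => by rw [key, hX m hm, zero_add]⟩
end

section
/- Let X, Y ∈ ℕ with X ≠ Y, and let N be the largest index n with [q_n](X) ≠ [q_n](Y). Then X < Y if and only if [q_N](X) < [q_N](Y). (Comparison of natural numbers is determined by the most significant differing Ostrowski digit.) -/
/-- The carry rule is what closes the induction: when the top digit is maximal, the digit below it
vanishes, and the recursion `q (n+2) = a (n+2) * q (n+1) + q n` leaves exactly `q n` of room. -/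
theorem ostrowski_prefix_lt {a p q : ℕ → ℕ} (hpq : IsConvergents a p q) {X : ℕ} {d : ℕ → ℕ}
    (hd : IsOstrowskiRep a q X d) (n : ℕ) : ∑ i ∈ Finset.range n, d i * q i < q n := by
  obtain ⟨-, hq0, -, hq1, -, hq⟩ := hpq
  obtain ⟨h0, hle, hcarry, -⟩ := hd
  induction n using Nat.twoStepInduction with
  | zero => simp [hq0]
  | one => simpa [hq0, hq1] using h0
  | more n ih0 ih1 =>
    rw [Finset.sum_range_succ, hq]
    rcases (hle n).eq_or_lt with h | h
    · rw [Finset.sum_range_succ, hcarry n h, h]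
      omega
    · have := Nat.mul_le_mul_right (q (n + 1)) (Nat.succ_le_of_lt h)
      rw [Nat.succ_mul] at this
      omega

theorem ostrowski_lt_of_msd_lt {a p q : ℕ → ℕ} (hpq : IsConvergents a p q) {X Y : ℕ}
    {d e : ℕ → ℕ} (hd : IsOstrowskiRep a q X d) (he : IsOstrowskiRep a q Y e) {N : ℕ}
    (hlt : d N < e N) (hmax : ∀ n : ℕ, N < n → d n = e n) : X < Y := by
  have hprefix : ∀ M, N + 1 ≤ M →
      ∑ i ∈ Finset.range M, d i * q i < ∑ i ∈ Finset.range M, e i * q i := by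
    intro M hM
    induction M, hM using Nat.le_induction with
    | base =>
      rw [Finset.sum_range_succ, Finset.sum_range_succ]
      have h1 := ostrowski_prefix_lt hpq hd N
      have h2 := Nat.mul_le_mul_right (q N) (Nat.succ_le_of_lt hlt)
      rw [Nat.succ_mul] at h2
      omega
    | succ M hM ih =>
      rw [Finset.sum_range_succ, Finset.sum_range_succ, hmax M hM]
      omega
  -- Prefix sums are constant once all further digits vanish.
  have hext : ∀ (c : ℕ → ℕ) (K M : ℕ), (∀ n, K ≤ n → c n = 0) → K ≤ M →
      ∑ i ∈ Finset.range K, c i * q i = ∑ i ∈ Finset.range M, c i * q i := by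
    intro c K M hc hKM
    refine Finset.sum_subset (Finset.range_mono hKM) fun i _ hi => ?_
    rw [hc i (by simpa using hi), zero_mul]
  obtain ⟨-, -, -, K, hK, hX⟩ := hd
  obtain ⟨-, -, -, L, hL, hY⟩ := he
  rw [hX, hY, hext d K (K + L + N + 1) hK (by omega), hext e L (K + L + N + 1) hL (by omega)]
  exact hprefix _ (by omega)

/-- Comparison is determined by the most significant differing Ostrowski digit:
if `N` is the largest index at which the digits of `X` and `Y` differ, then
`X < Y` iff `[q_N](X) < [q_N](Y)`. -/
theorem ostrowski_lt_iff_msd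
    (α : ℝ) (hα : 0 < α) (hirr : Irrational α)
    (a : ℕ → ℕ) (ha : IsCFExpansion α a)
    (p q : ℕ → ℕ) (hpq : IsConvergents a p q)
    (ost : ℕ → ℕ → ℕ) (host : ∀ X : ℕ, IsOstrowskiRep a q X (ost X))
    (X Y N : ℕ) (hXY : X ≠ Y)
    (hdiff : ost X N ≠ ost Y N)
    (hmax : ∀ n : ℕ, N < n → ost X n = ost Y n) :
    X < Y ↔ ost X N < ost Y N := by
  refine ⟨fun h => ?_, fun h => ostrowski_lt_of_msd_lt hpq (host X) (host Y) h hmax⟩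
  by_contra hn
  exact lt_asymm h <| ostrowski_lt_of_msd_lt hpq (host Y) (host X) (by omega)
    fun n hN => (hmax n hN).symm
end

section
/- Let X ∈ ℕ and let J ⊆ ℝ be an open interval with f_α(X) ∈ J. Then there exists an index m ∈ ℕ with [q_n](X) = 0 for all n > m, such that every Y ∈ ℕ with [q_n](Y) = [q_n](X) for all n ≤ m satisfies f_α(Y) ∈ J. -/
/-- The complete quotients of an irrational number are irrational. -/
lemma theta_irrational {α : ℝ} (hirr : Irrational α) {θ : ℕ → ℝ} (h0 : θ 0 = α)
    (hθ : ∀ n : ℕ, θ (n + 1) = 1 / (θ n - (⌊θ n⌋ : ℝ))) (n : ℕ) : Irrational (θ n) := by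
  induction n with
  | zero => rwa [h0]
  | succ n ih =>
    rw [hθ n, one_div]
    exact (ih.sub_intCast _).inv

lemma cf_theta_facts {α : ℝ} (hirr : Irrational α) {a : ℕ → ℕ} {θ : ℕ → ℝ} (h0 : θ 0 = α)
    (hθ : ∀ n : ℕ, (a n : ℤ) = ⌊θ n⌋ ∧ θ (n + 1) = 1 / (θ n - (⌊θ n⌋ : ℝ))) (n : ℕ) :
    1 < θ (n + 1) ∧ (θ n - a n) * θ (n + 1) = 1 := by
  have hi := theta_irrational hirr h0 (fun n => (hθ n).2) n
  have hne : θ n - (⌊θ n⌋ : ℝ) ≠ 0 := (hi.sub_intCast _).ne_zero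
  have hpos : 0 < θ n - (⌊θ n⌋ : ℝ) :=
    lt_of_le_of_ne (sub_nonneg.2 (Int.floor_le _)) hne.symm
  have hlt : θ n - (⌊θ n⌋ : ℝ) < 1 := by linarith [Int.lt_floor_add_one (θ n)]
  have hc : (a n : ℝ) = (⌊θ n⌋ : ℝ) := by exact_mod_cast (hθ n).1
  rw [hc, (hθ n).2]
  exact ⟨(one_lt_div hpos).2 hlt, mul_one_div_cancel hne⟩

lemma cf_beta_step {α : ℝ} {a p q : ℕ → ℕ} (hpq : IsConvergents a p q) {θ : ℕ → ℝ}
    (h0 : θ 0 = α) (h1 : ∀ n, (θ n - a n) * θ (n + 1) = 1) (n : ℕ) :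
    (q n * α - p n : ℝ) = -θ (n + 2) * (q (n + 1) * α - p (n + 1)) := by
  obtain ⟨hp0, hq0, hp1, hq1, hp, hq⟩ := hpq
  induction n with
  | zero =>
    have e0 := h1 0
    have e1 := h1 1
    rw [h0] at e0
    simp only [zero_add, hp0, hq0, hp1, hq1] at *
    push_cast
    linear_combination θ 2 * e0 - (α - a 0) * e1
  | succ n ih =>
    have e := h1 (n + 2)
    have hp' : (p (n + 1 + 1) : ℝ) = a (n + 2) * p (n + 1) + p n := by exact_mod_cast hp n
    have hq' : (q (n + 1 + 1) : ℝ) = a (n + 2) * q (n + 1) + q n := by exact_mod_cast hq n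
    rw [hp', hq']
    linear_combination (-(q (n + 1) * α - p (n + 1) : ℝ)) * e + θ (n + 3) * ih

lemma cf_beta_abs {α : ℝ} (hirr : Irrational α) {a p q : ℕ → ℕ} (ha : IsCFExpansion α a)
    (hpq : IsConvergents a p q) (n : ℕ) :
    (a (n + 2) : ℝ) * |(q (n + 1) * α - p (n + 1) : ℝ)|
        = |(q n * α - p n : ℝ)| - |(q (n + 2) * α - p (n + 2) : ℝ)| ∧
      |(q (n + 1) * α - p (n + 1) : ℝ)| ≤ |(q n * α - p n : ℝ)| ∧
      |(q (n + 2) * α - p (n + 2) : ℝ)| ≤ |(q n * α - p n : ℝ)| / 2 := by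
  obtain ⟨θ, h0, hθ⟩ := ha
  have hf := cf_theta_facts hirr h0 hθ
  have hs (n : ℕ) : |(q n * α - p n : ℝ)| = θ (n + 2) * |(q (n + 1) * α - p (n + 1) : ℝ)| := by
    rw [cf_beta_step hpq h0 (fun n => (hf n).2) n, abs_mul, abs_neg,
      abs_of_pos (zero_lt_one.trans (hf (n + 1)).1)]
  have s0 := hs n
  have s1 := hs (n + 1)
  have e := (hf (n + 2)).2
  have t2 := (hf (n + 1)).1
  have t3 := (hf (n + 2)).1
  simp only [add_assoc, Nat.reduceAdd] at s0 s1 e t2 t3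
  have hA : (1 : ℝ) ≤ a (n + 2) := by
    have h := (hθ (n + 2)).1
    have h' : (1 : ℤ) ≤ ⌊θ (n + 2)⌋ := Int.le_floor.2 (by exact_mod_cast t2.le)
    exact_mod_cast h ▸ h'
  have n2 := abs_nonneg (q (n + 2) * α - p (n + 2) : ℝ)
  have n1 := abs_nonneg (q (n + 1) * α - p (n + 1) : ℝ)
  have key : (a (n + 2) : ℝ) * |(q (n + 1) * α - p (n + 1) : ℝ)|
      = |(q n * α - p n : ℝ)| - |(q (n + 2) * α - p (n + 2) : ℝ)| := by
    linear_combination (-1 : ℝ) * s0 - (θ (n + 2) - a (n + 2)) * s1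
      - |(q (n + 2) * α - p (n + 2) : ℝ)| * e
  have l1 : |(q (n + 2) * α - p (n + 2) : ℝ)| ≤ |(q (n + 1) * α - p (n + 1) : ℝ)| := by
    nlinarith
  have l2 := le_mul_of_one_le_left n1 hA
  exact ⟨key, by linarith, by linarith⟩

/-- The contribution of the Ostrowski digits above index `m` is at most `|βₘ| + |βₘ₊₁|`,
uniformly in the number `k` of digits. -/
lemma tail_bound {α : ℝ} (hirr : Irrational α) {a p q : ℕ → ℕ} (ha : IsCFExpansion α a)
    (hpq : IsConvergents a p q) {d : ℕ → ℕ} (hd : ∀ n : ℕ, d (n + 1) ≤ a (n + 2)) (m k : ℕ) :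
    |∑ i ∈ Finset.range k, (d (m + 1 + i) : ℝ) * (q (m + 1 + i) * α - p (m + 1 + i))|
      ≤ |(q m * α - p m : ℝ)| + |(q (m + 1) * α - p (m + 1) : ℝ)| := by
  -- The subtracted terms make the telescoping induction close.
  suffices h :
      |∑ i ∈ Finset.range k, (d (m + 1 + i) : ℝ) * (q (m + 1 + i) * α - p (m + 1 + i))|
        ≤ |(q m * α - p m : ℝ)| + |(q (m + 1) * α - p (m + 1) : ℝ)|
          - |(q (m + k) * α - p (m + k) : ℝ)| - |(q (m + k + 1) * α - p (m + k + 1) : ℝ)| by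
    linarith [abs_nonneg (q (m + k) * α - p (m + k) : ℝ),
      abs_nonneg (q (m + k + 1) * α - p (m + k + 1) : ℝ)]
  induction k with
  | zero => simp
  | succ k ih =>
    rw [Finset.sum_range_succ]
    have e : m + 1 + k = m + k + 1 := by ring
    have h1 := (cf_beta_abs hirr ha hpq (m + k)).1
    have h2 : (d (m + k + 1) : ℝ) ≤ a (m + k + 2) := by exact_mod_cast hd (m + k)
    have h3 := mul_le_mul_of_nonneg_right h2
      (abs_nonneg (q (m + k + 1) * α - p (m + k + 1) : ℝ))
    have h4 : |(d (m + k + 1) : ℝ) * (q (m + k + 1) * α - p (m + k + 1))|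
        = d (m + k + 1) * |(q (m + k + 1) * α - p (m + k + 1) : ℝ)| := by
      rw [abs_mul, Nat.abs_cast]
    refine (abs_add_le _ _).trans ?_
    rw [e, h4, show m + (k + 1) = m + k + 1 from rfl, show m + k + 1 + 1 = m + k + 2 from rfl]
    linarith

/-- `|βₘ| + |βₘ₊₁|` gets arbitrarily small, for arbitrarily large `m`. -/
lemma exists_small {α : ℝ} (hirr : Irrational α) {a p q : ℕ → ℕ} (ha : IsCFExpansion α a)
    (hpq : IsConvergents a p q) (N : ℕ) {ε : ℝ} (hε : 0 < ε) :
    ∃ m, N ≤ m ∧ |(q m * α - p m : ℝ)| + |(q (m + 1) * α - p (m + 1) : ℝ)| < ε := by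
  have hk (k : ℕ) : |(q (N + 2 * k) * α - p (N + 2 * k) : ℝ)|
      ≤ |(q N * α - p N : ℝ)| * (1 / 2) ^ k := by
    induction k with
    | zero => simp
    | succ k ih =>
      have h := (cf_beta_abs hirr ha hpq (N + 2 * k)).2.2
      rw [show N + 2 * (k + 1) = N + 2 * k + 2 by ring, pow_succ]
      linarith
  have hlim : Filter.Tendsto (fun k : ℕ => |(q N * α - p N : ℝ)| * (1 / 2 : ℝ) ^ k)
      Filter.atTop (nhds 0) := by
    simpa using (tendsto_pow_atTop_nhds_zero_of_lt_one (by norm_num : (0 : ℝ) ≤ 1 / 2)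
      (by norm_num)).const_mul |(q N * α - p N : ℝ)|
  obtain ⟨k, hk'⟩ := (hlim.eventually_lt_const (half_pos hε)).exists
  refine ⟨N + 2 * k, by omega, ?_⟩
  have h := (cf_beta_abs hirr ha hpq (N + 2 * k)).2.1
  linarith [hk k]

lemma sum_range_of_zero_above {d q : ℕ → ℕ} {N M : ℕ} (h : ∀ n, N ≤ n → d n = 0)
    (hNM : N ≤ M) : ∑ n ∈ Finset.range N, d n * q n = ∑ n ∈ Finset.range M, d n * q n := by
  apply Finset.sum_subset (Finset.range_mono hNM)
  intro n _ hn
  rw [h n (by simpa using hn), zero_mul]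

/-- Given an open interval `J` around `f_α X`, there is an index `m` (with all
digits of `X` above `m` zero) such that every `Y` whose Ostrowski digits agree
with those of `X` up to index `m` satisfies `f_α Y ∈ J`. -/
theorem prefix_determines_fracPart_locally
    (α : ℝ) (hα : 0 < α) (hirr : Irrational α)
    (a : ℕ → ℕ) (ha : IsCFExpansion α a)
    (p q : ℕ → ℕ) (hpq : IsConvergents a p q)
    (ost : ℕ → ℕ → ℕ) (host : ∀ X : ℕ, IsOstrowskiRep a q X (ost X))
    (fα : ℕ → ℝ) (hf : IsFracPart α fα)
    (X : ℕ) (lo hi : ℝ) (hJ : fα X ∈ Set.Ioo lo hi) :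
    ∃ m : ℕ, (∀ n : ℕ, m < n → ost X n = 0) ∧
      ∀ Y : ℕ, (∀ n : ℕ, n ≤ m → ost Y n = ost X n) → fα Y ∈ Set.Ioo lo hi := by
  obtain ⟨-, -, -, NX, hNX, hX⟩ := host X
  obtain ⟨⟨hl, hr⟩, U, hU⟩ := hf X
  rw [one_div_one_div] at hl hr
  have hl' : -(α - (⌊α⌋ : ℝ)) < fα X := by
    refine lt_of_le_of_ne hl fun heq => ?_
    have hirr' : Irrational (α * ((X + 1 : ℕ) : ℝ)) := hirr.mul_natCast (by omega)
    apply hirr'.ne_int (U + ⌊α⌋)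
    push_cast
    linarith
  obtain ⟨hJ1, hJ2⟩ := hJ
  obtain ⟨ε, hε, e1, e2, e3, e4⟩ : ∃ ε > 0, ε ≤ fα X - lo ∧ ε ≤ hi - fα X ∧
      ε ≤ fα X + (α - (⌊α⌋ : ℝ)) ∧ ε ≤ 1 - (α - (⌊α⌋ : ℝ)) - fα X := by
    refine ⟨min (min (fα X - lo) (hi - fα X))
      (min (fα X + (α - (⌊α⌋ : ℝ))) (1 - (α - (⌊α⌋ : ℝ)) - fα X)), ?_, ?_, ?_, ?_, ?_⟩
    · refine lt_min (lt_min ?_ ?_) (lt_min ?_ ?_) <;> linarith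
    · exact (min_le_left _ _).trans (min_le_left _ _)
    · exact (min_le_left _ _).trans (min_le_right _ _)
    · exact (min_le_right _ _).trans (min_le_left _ _)
    · exact (min_le_right _ _).trans (min_le_right _ _)
  obtain ⟨m, hm, hsmall⟩ := exists_small hirr ha hpq NX hε
  refine ⟨m, fun n hn => hNX n (by omega), fun Y hY => ?_⟩
  obtain ⟨-, hdY, -, NY, hNY, hYs⟩ := host Y
  obtain ⟨⟨hYl, hYr⟩, V, hV⟩ := hf Y
  rw [one_div_one_div] at hYl hYr
  have hS := (tail_bound hirr ha hpq hdY m NY).trans_lt hsmall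
  have hsplit : Y = X + ∑ i ∈ Finset.range NY, ost Y (m + 1 + i) * q (m + 1 + i) := by
    have hX' := hX.trans (sum_range_of_zero_above hNX (by omega : NX ≤ m + 1))
    have hY' := hYs.trans (sum_range_of_zero_above hNY (by omega : NY ≤ m + 1 + NY))
    have hpre : ∑ n ∈ Finset.range (m + 1), ost Y n * q n
        = ∑ n ∈ Finset.range (m + 1), ost X n * q n :=
      Finset.sum_congr rfl fun n hn => by
        rw [hY n (Nat.lt_succ_iff.1 (Finset.mem_range.1 hn))]
    rw [Finset.sum_range_add, hpre, ← hX'] at hY'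
    exact hY'
  set P : ℕ := ∑ i ∈ Finset.range NY, ost Y (m + 1 + i) * p (m + 1 + i) with hP
  set S : ℝ := ∑ i ∈ Finset.range NY,
    (ost Y (m + 1 + i) : ℝ) * (q (m + 1 + i) * α - p (m + 1 + i)) with hSdef
  have hYα : α * (Y : ℝ) = α * X + (S + P) := by
    have hc : (Y : ℝ)
        = X + ∑ i ∈ Finset.range NY, (ost Y (m + 1 + i) : ℝ) * q (m + 1 + i) := by
      exact_mod_cast hsplit
    rw [hc, mul_add, hSdef, hP, Finset.mul_sum]
    push_cast
    rw [← Finset.sum_add_distrib]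
    congr 1
    exact Finset.sum_congr rfl fun i _ => by ring
  rw [abs_lt] at hS
  -- `f_α Y` and `f_α X + S` lie in the same half-open unit interval and differ by an integer.
  have hdiff : fα Y - (fα X + S) = (((U : ℤ) + P - V : ℤ) : ℝ) := by
    push_cast
    linarith
  have hz : ((U : ℤ) + P - V : ℤ) = 0 := by
    have b1 : (((U : ℤ) + P - V : ℤ) : ℝ) < 1 := by rw [← hdiff]; linarith
    have b2 : (-1 : ℝ) < (((U : ℤ) + P - V : ℤ) : ℝ) := by rw [← hdiff]; linarith
    have b1' : ((U : ℤ) + P - V : ℤ) < 1 := by exact_mod_cast b1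
    have b2' : (-1 : ℤ) < ((U : ℤ) + P - V : ℤ) := by exact_mod_cast b2
    omega
  rw [hz, Int.cast_zero] at hdiff
  constructor <;> linarith
end

section
/- Let X1, X2, Y1, Y2 ∈ ℕ. If |f_α(X1) − f_β(X2)| = |f_α(Y1) − f_β(Y2)|, then X1 = Y1 and X2 = Y2. -/
/-- If `1, α, β` are `ℚ`-linearly independent then
`|f_α X1 − f_β X2| = |f_α Y1 − f_β Y2|` implies `X1 = Y1` and `X2 = Y2`. -/
theorem fracPart_abs_diff_injective
    (α β : ℝ) (hα : 0 < α) (hβ : 0 < β)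
    (hirrα : Irrational α) (hirrβ : Irrational β)
    (hind : ∀ u v w : ℚ, (u : ℝ) + (v : ℝ) * α + (w : ℝ) * β = 0 →
      u = 0 ∧ v = 0 ∧ w = 0)
    (fα : ℕ → ℝ) (hfα : IsFracPart α fα)
    (fβ : ℕ → ℝ) (hfβ : IsFracPart β fβ)
    (X1 X2 Y1 Y2 : ℕ)
    (h : |fα X1 - fβ X2| = |fα Y1 - fβ Y2|) :
    X1 = Y1 ∧ X2 = Y2 := by
  obtain ⟨-, U1, hU1⟩ := hfα X1
  obtain ⟨-, U2, hU2⟩ := hfβ X2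
  obtain ⟨-, V1, hV1⟩ := hfα Y1
  obtain ⟨-, V2, hV2⟩ := hfβ Y2
  -- The two signs of the absolute values give two rational relations between `1`, `α`, `β`.
  rcases abs_eq_abs.mp h with h | h
  · obtain ⟨-, hv, hw⟩ := hind (V1 - U1 + U2 - V2) (X1 - Y1) (Y2 - X2) (by
      push_cast
      linarith)
    constructor
    · exact_mod_cast sub_eq_zero.mp hv
    · exact_mod_cast (sub_eq_zero.mp hw).symm
  · obtain ⟨-, hv, hw⟩ := hind (-U1 - V1 + U2 + V2) (X1 + Y1) (-(X2 + Y2)) (by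
      push_cast
      linarith)
    -- A sum of two natural numbers vanishes only if both do, so all four arguments are `0`.
    have hv' : X1 + Y1 = 0 := by exact_mod_cast hv
    have hw' : X2 + Y2 = 0 := by exact_mod_cast neg_eq_zero.mp hw
    omega
end
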